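/- Let 1 ≤ p < ∞ and let ρ be an admissible weight function on ℝ. The following assertions are equivalent: (1) the translation semigroup (T_t)_{t≥0} is frequently hypercyclic on L_p^ρ(ℝ); (2) Σ_{k∈ℤ} ρ(k) < ∞; (3) ∫_{−∞}^{∞} ρ(t) dt < ∞; (4) the translation semigroup (T_t)_{t≥0} is chaotic on L_p^ρ(ℝ). -/

import Mathlib

/-! Write `L_p^ρ` as the `L^p` space of the measure `ρ(x) dx`.

**Necessity of summability.** If `T_t f` is close to the indicator of `[0, 1]`, then `|f| ^ p` has a
definite amount of mass on `[t, t + 1]`, and its integral against `ρ (· - t)` is bounded. Playing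
two such times against each other bounds `∑ ρ (m - n)` over all `m` in the set `A` of integer cells
that contain such times, uniformly in `n ∈ A` (`exists_eps_summable`). Frequent hypercyclicity makes
the lower density of `A` positive, and so does a single periodic point near the indicator. The
combinatorial lemma `summable_of_density`, in the spirit of Bayart and Ruzsa, concludes: the set `D`
of differences occurring in `A` with positive density is syndetic and `ρ` is summable over `D`;
since `ρ` grows at most exponentially to the left, `ρ` is summable over `ℤ`. Comparing `ρ` on a unit
interval with its value at the right endpoint gives integrability.

**Sufficiency of integrability.** Then bounded functions belong to `L_p^ρ`, and even some function
`φ(x) = a ⌊|x|⌋₊` with `a → ∞` does (`exists_slow`). The universal function `glue h` carries around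
`ctr i` a copy of a profile of height `a v` and radius `v`, where `v = lev i` is the 2-adic valuation
of `i + 1`. The centers grow linearly and are so far apart that, seen from one of level `v`, all
other blocks together are dominated by `φ` outside `[-v, v]` (`abs_glue_sub_le`). Each level
recurs along an arithmetic progression of indices, and each member of a dense sequence is the source
of the profiles at infinitely many levels, so `glue h` is frequently hypercyclic. Periodic extensions
of bounded compactly supported functions give a dense set of periodic points. -/

open Filter MeasureTheory

/-- An admissible weight function on ℝ. -/
def Admissible (ρ : ℝ → ℝ) : Prop :=
  Measurable ρ ∧ (∀ x, 0 < ρ x) ∧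
    ∃ M : ℝ, 1 ≤ M ∧ ∃ ω : ℝ, ∀ τ : ℝ, ∀ t : ℝ, 0 < t →
      ρ τ ≤ M * Real.exp (ω * t) * ρ (τ + t)

/-- The lower density of a measurable set `M ⊆ [0,∞)`. -/
noncomputable def ldensR (M : Set ℝ) : ℝ :=
  atTop.liminf fun N : ℝ => (volume (M ∩ Set.Icc 0 N)).toReal / N

/-- Membership in `L_p^ρ(ℝ)`. -/
def MemLpRho (p : ℝ) (ρ : ℝ → ℝ) (f : ℝ → ℝ) : Prop :=
  Measurable f ∧ (∫⁻ x : ℝ, ENNReal.ofReal (|f x| ^ p * ρ x)) < ⊤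

/-- The `L_p^ρ`-distance of `T_t f` and `g`, raised to the power `p`, is at most `ε^p`. -/
def TransLpClose (p : ℝ) (ρ : ℝ → ℝ) (f g : ℝ → ℝ) (t ε : ℝ) : Prop :=
  (∫⁻ x : ℝ, ENNReal.ofReal (|f (x + t) - g x| ^ p * ρ x)) ≤ ENNReal.ofReal (ε ^ p)

/-- Frequent hypercyclicity of the translation semigroup on `L_p^ρ(ℝ)`. -/
def FHTransLp (p : ℝ) (ρ : ℝ → ℝ) : Prop :=
  ∃ f : ℝ → ℝ, MemLpRho p ρ f ∧ ∀ g : ℝ → ℝ, MemLpRho p ρ g → ∀ ε : ℝ, 0 < ε →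
    0 < ldensR {t : ℝ | 0 ≤ t ∧ TransLpClose p ρ f g t ε}

/-- Chaos of the translation semigroup on `L_p^ρ(ℝ)`: it is hypercyclic (some orbit is dense)
and its periodic points (`T_t f = f` in `L_p^ρ` for some `t > 0`) are dense. -/
def ChaoticTransLp (p : ℝ) (ρ : ℝ → ℝ) : Prop :=
  (∃ f : ℝ → ℝ, MemLpRho p ρ f ∧ ∀ g : ℝ → ℝ, MemLpRho p ρ g → ∀ ε : ℝ, 0 < ε →
      ∃ t : ℝ, 0 ≤ t ∧ TransLpClose p ρ f g t ε) ∧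
  (∀ g : ℝ → ℝ, MemLpRho p ρ g → ∀ ε : ℝ, 0 < ε → ∃ f : ℝ → ℝ, MemLpRho p ρ f ∧
      (∃ t : ℝ, 0 < t ∧ (∫⁻ x : ℝ, ENNReal.ofReal (|f (x + t) - f x| ^ p * ρ x)) = 0) ∧
      (∫⁻ x : ℝ, ENNReal.ofReal (|f x - g x| ^ p * ρ x)) ≤ ENNReal.ofReal (ε ^ p))

/-! ### A counting bound and a summability lemma for sets of positive density -/

/-- If the translates `S + i`, `i ∈ F`, of a finite set `S ⊆ [0, N)` overlap pairwise in at most `b`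
points, then they almost fill `|F| |S|` places of `[-L, N + L]`, which bounds `|F|`. The proof counts
pairs `(x, i)` with `x - i ∈ S`, using `m ≤ 1 + m (m - 1)` for the multiplicity `m` of each `x`. -/
theorem card_family_bound {S : Finset ℤ} {N : ℕ} (hS : ∀ x ∈ S, 0 ≤ x ∧ x < N) {F : Finset ℤ} {L : ℕ}
    (hF : ∀ i ∈ F, |i| ≤ L) {b : ℝ} (hb0 : 0 ≤ b)
    (hb : ∀ i ∈ F, ∀ j ∈ F, i ≠ j → (((S.filter (fun n => n + (i - j) ∈ S)).card : ℕ) : ℝ) ≤ b) :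
    (F.card : ℝ) * S.card ≤ (N + 2 * L + 1) + (F.card : ℝ) ^ 2 * b := by
  classical
  set X : Finset ℤ := Finset.Icc (-(L:ℤ)) (N + L) with hX
  have h1 : ∀ x : ℤ, (F.filter (fun i => x - i ∈ S)).card ≤
      1 + (F.offDiag.filter (fun q => x - q.1 ∈ S ∧ x - q.2 ∈ S)).card := by
    intro x
    have : F.offDiag.filter (fun q => x - q.1 ∈ S ∧ x - q.2 ∈ S)
        = (F.filter (fun i => x - i ∈ S)).offDiag := by
      ext q; simp only [Finset.mem_filter, Finset.mem_offDiag]; tauto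
    rw [this, Finset.offDiag_card]
    rcases Nat.eq_zero_or_pos (F.filter (fun i => x - i ∈ S)).card with h | h
    · omega
    · obtain ⟨m, hm⟩ := Nat.exists_eq_succ_of_ne_zero h.ne'
      rw [hm, Nat.succ_eq_add_one]
      have : (m+1)*(m+1) - (m+1) = m * m + m := by
        rw [Nat.sub_eq_iff_eq_add (by nlinarith)]; ring
      rw [this]; nlinarith
  have h2 : ∑ x ∈ X, (F.filter (fun i => x - i ∈ S)).card = F.card * S.card := by
    have := Finset.sum_card_bipartiteAbove_eq_sum_card_bipartiteBelow (s := X) (t := F)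
      (fun x i => x - i ∈ S)
    simp only [Finset.bipartiteAbove, Finset.bipartiteBelow] at this
    rw [this, Finset.sum_const_nat]
    intro i hi
    have hi' := abs_le.1 (hF i hi)
    refine Finset.card_bij' (fun x _ => x - i) (fun x _ => x + i) ?_ ?_ ?_ ?_
    · intro x hx; exact (Finset.mem_filter.1 hx).2
    · intro x hx
      have := hS x hx
      simp only [Finset.mem_filter, hX, Finset.mem_Icc, add_sub_cancel_right]
      refine ⟨⟨?_, ?_⟩, hx⟩ <;> linarith
    · intro x _; simp
    · intro x _; simp
  have h3 : ((∑ x ∈ X, (F.offDiag.filter (fun q => x - q.1 ∈ S ∧ x - q.2 ∈ S)).card : ℕ) : ℝ)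
      ≤ F.offDiag.card * b := by
    have := Finset.sum_card_bipartiteAbove_eq_sum_card_bipartiteBelow (s := X) (t := F.offDiag)
      (fun x q => x - q.1 ∈ S ∧ x - q.2 ∈ S)
    simp only [Finset.bipartiteAbove, Finset.bipartiteBelow] at this
    rw [this]
    push_cast
    rw [← nsmul_eq_mul]
    refine Finset.sum_le_card_nsmul _ _ _ ?_
    intro q hq
    rw [Finset.mem_offDiag] at hq
    refine le_trans ?_ (hb q.1 hq.1 q.2 hq.2.1 hq.2.2)
    norm_cast
    refine Finset.card_le_card_of_injOn (fun x => x - q.1) ?_ ?_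
    · intro x hx
      simp only [Finset.coe_filter, Set.mem_ofPred_eq] at hx ⊢
      refine ⟨hx.2.1, ?_⟩
      have : x - q.1 + (q.1 - q.2) = x - q.2 := by ring
      rw [this]; exact hx.2.2
    · intro x _ y _ h; simpa using h
  have hXc : (X.card : ℝ) = N + 2 * L + 1 := by
    have : X.card = N + 2 * L + 1 := by rw [hX, Int.card_Icc]; omega
    rw [this]; push_cast; ring
  have h4 : F.card * S.card ≤ X.card +
      ∑ x ∈ X, (F.offDiag.filter (fun q => x - q.1 ∈ S ∧ x - q.2 ∈ S)).card := by
    rw [← h2, Finset.card_eq_sum_ones, ← Finset.sum_add_distrib]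
    exact Finset.sum_le_sum fun x _ => h1 x
  have h5 : ((F.card * S.card : ℕ) : ℝ) ≤ X.card + F.offDiag.card * b := by
    refine le_trans (Nat.cast_le.2 h4) ?_
    push_cast at h3 ⊢
    linarith
  have h6 : (F.offDiag.card : ℝ) ≤ (F.card : ℝ) ^ 2 := by
    rw [Finset.offDiag_card]
    have : F.card * F.card - F.card ≤ F.card ^ 2 := by rw [sq]; omega
    exact_mod_cast this
  push_cast at h5
  nlinarith [mul_le_mul_of_nonneg_right h6 hb0]

set_option maxHeartbeats 1000000 in
/-- Let `A ⊆ ℕ` have positive lower density and let the sums of `w` over the translates `A - n`,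
`n ∈ A`, be uniformly bounded; assume that `w k ≤ C * w l` whenever `l` lies at most `R` to the right
of `k`. Then `w` is summable. Averaging over `n` shows that `w` is summable on the set `D` of
differences that `A` realizes with positive density. A family of integers with all differences
outside `D` gives almost disjoint translates of `A`, so it is finite; a maximal one, `F`,
satisfies `F + D = ℤ`, and the growth condition transfers summability from `D` to `ℤ`. -/
theorem summable_of_density {A : Set ℕ} {δ : ℝ} (hδ : 0 < δ) [DecidablePred (· ∈ A)]
    (hA : ∀ᶠ N : ℕ in atTop, δ * N ≤ (((Finset.range N).filter (· ∈ A)).card : ℝ))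
    {w : ℤ → ℝ} (hw : ∀ k, 0 ≤ w k)
    (hC : ∀ R : ℕ, ∃ C : ℝ, 0 < C ∧ ∀ k l : ℤ, k ≤ l → l ≤ k + R → w k ≤ C * w l)
    {K : ℝ} (hK : ∀ n ∈ A, ∀ S : Finset ℕ, (∀ m ∈ S, m ∈ A) → ∑ m ∈ S, w ((m : ℤ) - n) ≤ K) :
    Summable w := by
  classical
  have hK0 : 0 ≤ K := by
    obtain ⟨N, hN, hN0⟩ := (hA.and (eventually_gt_atTop 0)).exists
    have hpos : (0 : ℝ) < (((Finset.range N).filter (· ∈ A)).card : ℝ) :=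
      lt_of_lt_of_le (mul_pos hδ (by exact_mod_cast hN0)) hN
    obtain ⟨n, hn⟩ := Finset.card_pos.1 (by exact_mod_cast hpos)
    simpa using hK n (Finset.mem_filter.1 hn).2 ∅ (by simp)
  set SN : ℕ → Finset ℕ := fun N => (Finset.range N).filter (· ∈ A) with hSN
  set S : ℕ → Finset ℤ := fun N => (SN N).image (fun n : ℕ => (n : ℤ)) with hSdef
  have hScard : ∀ N, (S N).card = (SN N).card := fun N =>
    Finset.card_image_of_injective _ Nat.cast_injective
  have hSb : ∀ N, ∀ x ∈ S N, 0 ≤ x ∧ x < N := by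
    intro N x hx
    simp only [hSdef, hSN, Finset.mem_image, Finset.mem_filter, Finset.mem_range] at hx
    obtain ⟨n, ⟨hn, _⟩, rfl⟩ := hx
    omega
  set c : ℕ → ℤ → ℕ := fun N k => ((S N).filter (fun n => n + k ∈ S N)).card with hc
  have hcsymm : ∀ N k, c N (-k) = c N k := by
    intro N k
    refine Finset.card_bij' (fun x _ => x - k) (fun x _ => x + k) ?_ ?_ ?_ ?_
    · intro x hx
      simp only [Finset.mem_filter] at hx ⊢
      refine ⟨by simpa [sub_eq_add_neg] using hx.2, by simpa using hx.1⟩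
    · intro x hx
      simp only [Finset.mem_filter] at hx ⊢
      refine ⟨hx.2, by simpa using hx.1⟩
    · intro x _; simp
    · intro x _; simp
  -- an ultrafilter at infinity makes the alternative `k ∈ D` or not uniform in `N`
  set U : Ultrafilter ℕ := hyperfilter ℕ with hU
  have hUle : (U : Filter ℕ) ≤ atTop := Nat.hyperfilter_le_atTop
  obtain ⟨r, hr⟩ := exists_nat_ge (2 / δ)
  have hrδ : 2 ≤ r * δ := by rwa [div_le_iff₀ hδ] at hr
  have hr0 : (0 : ℝ) < r := by
    by_contra h
    nlinarith
  set d : ℝ := min δ (1 / (2 * (r:ℝ) ^ 2)) with hd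
  have hd0 : 0 < d := lt_min hδ (by positivity)
  set D : Set ℤ := {k | ∀ᶠ N in (U : Filter ℕ), d * N ≤ c N k} with hD
  have hD0 : (0 : ℤ) ∈ D := by
    refine (hA.filter_mono hUle).mono fun N hN => ?_
    have : c N 0 = (SN N).card := by simp [hc, hScard]
    rw [this]
    exact le_trans (mul_le_mul_of_nonneg_right (min_le_left _ _) (Nat.cast_nonneg _)) hN
  -- average the hypothesis `hK` over `n ∈ A ∩ [0, N)` for a large `N`
  have hDsum : ∀ T : Finset ℤ, (∀ k ∈ T, k ∈ D) → ∑ k ∈ T, w k ≤ K / d := by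
    intro T hT
    have h1 : ∀ᶠ N in (U : Filter ℕ), ∀ k ∈ T, d * N ≤ c N k :=
      (Filter.eventually_all_finset T).2 hT
    obtain ⟨N, hN, hN0⟩ := (h1.and ((eventually_gt_atTop 0).filter_mono hUle)).exists
    have hNr : (0:ℝ) < N := by exact_mod_cast hN0
    have hbound : ∀ n ∈ S N, ∑ k ∈ T.filter (fun k => n + k ∈ S N), w k ≤ K := by
      intro n hn
      simp only [hSdef, Finset.mem_image] at hn
      obtain ⟨n', hn', rfl⟩ := hn
      have hnA : n' ∈ A := (Finset.mem_filter.1 hn').2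
      refine le_trans ?_ (hK n' hnA (SN N) fun m hm => (Finset.mem_filter.1 hm).2)
      have : ∑ m ∈ SN N, w ((m:ℤ) - n') = ∑ k ∈ (SN N).image (fun m : ℕ => (m:ℤ) - n'), w k := by
        rw [Finset.sum_image]
        intro x _ y _ h
        simpa using h
      rw [this]
      refine Finset.sum_le_sum_of_subset_of_nonneg ?_ fun _ _ _ => hw _
      intro k hk
      simp only [Finset.mem_filter, hSdef, Finset.mem_image] at hk ⊢
      obtain ⟨_, m, hm, hmk⟩ := hk
      exact ⟨m, hm, by omega⟩
    have h2 : ∑ n ∈ S N, ∑ k ∈ T.filter (fun k => n + k ∈ S N), w k ≤ N * K := by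
      have hle : ((S N).card : ℝ) ≤ N := by
        rw [hScard]
        have := Finset.card_filter_le (Finset.range N) (· ∈ A)
        rw [Finset.card_range] at this
        exact_mod_cast this
      refine le_trans (Finset.sum_le_card_nsmul _ _ K hbound) ?_
      rw [nsmul_eq_mul]
      exact mul_le_mul_of_nonneg_right hle hK0
    have h3 : ∑ n ∈ S N, ∑ k ∈ T.filter (fun k => n + k ∈ S N), w k = ∑ k ∈ T, c N k * w k := by
      simp only [Finset.sum_filter]
      rw [Finset.sum_comm]
      refine Finset.sum_congr rfl fun k _ => ?_
      rw [← Finset.sum_filter, Finset.sum_const, nsmul_eq_mul]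
    have h4 : d * N * ∑ k ∈ T, w k ≤ N * K := by
      rw [Finset.mul_sum]
      refine le_trans (Finset.sum_le_sum fun k hk => ?_) (h3 ▸ h2)
      exact mul_le_mul_of_nonneg_right (hN k hk) (hw k)
    rw [le_div_iff₀ hd0]
    nlinarith
  have hDsummable : Summable (D.indicator w) := by
    refine summable_of_sum_le (c := K / d) (fun k => Set.indicator_nonneg (fun _ _ => hw _) k) ?_
    intro T
    have := hDsum (T.filter (· ∈ D)) fun k hk => (Finset.mem_filter.1 hk).2
    rw [Finset.sum_filter] at this
    simpa [Set.indicator_apply] using this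
  -- families with all differences outside `D` have fewer than `r` elements
  have hfam : ∀ F : Finset ℤ, (∀ i ∈ F, ∀ j ∈ F, i ≠ j → i - j ∉ D) → F.card ≤ r := by
    intro F₀ hF₀
    by_contra! hcard
    obtain ⟨F, hFF, hFr⟩ := Finset.exists_subset_card_eq hcard.le
    have hF : ∀ i ∈ F, ∀ j ∈ F, i ≠ j → i - j ∉ D := fun i hi j hj =>
      hF₀ i (hFF hi) j (hFF hj)
    obtain ⟨L, hL⟩ : ∃ L : ℕ, ∀ i ∈ F, |i| ≤ L := by
      refine ⟨∑ i ∈ F, i.natAbs, fun i hi => ?_⟩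
      rw [Int.abs_eq_natAbs]
      exact_mod_cast Finset.single_le_sum (f := Int.natAbs) (fun _ _ => Nat.zero_le _) hi
    have h1 : ∀ᶠ N in (U : Filter ℕ), ∀ q ∈ F.offDiag, ¬ d * N ≤ c N (q.1 - q.2) := by
      refine (Filter.eventually_all_finset _).2 fun q hq => ?_
      rw [Finset.mem_offDiag] at hq
      exact Ultrafilter.eventually_not.2 (hF q.1 hq.1 q.2 hq.2.1 hq.2.2)
    obtain ⟨N, ⟨hN, hNA⟩, hNL⟩ := ((h1.and (hA.filter_mono hUle)).and
      ((eventually_gt_atTop (4 * L + 2)).filter_mono hUle)).exists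
    have h2 := card_family_bound (hSb N) hL (b := d * N) (by positivity) (fun i hi j hj hij => by
      have := hN (i, j) (Finset.mem_offDiag.2 ⟨hi, hj, hij⟩)
      exact (not_le.1 this).le)
    rw [hFr, hScard] at h2
    have h3 : d * (2 * (r:ℝ)^2) ≤ 1 := by
      rw [← le_div_iff₀ (by positivity)]; exact min_le_right _ _
    have hNL' : (4 * L + 2 : ℝ) < N := by exact_mod_cast hNL
    have h4 : (r:ℝ) * (δ * N) ≤ r * (SN N).card := mul_le_mul_of_nonneg_left hNA hr0.le
    have h5 : 2 * (N:ℝ) ≤ r * δ * N := mul_le_mul_of_nonneg_right hrδ (Nat.cast_nonneg _)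
    have h6 : d * (2 * (r:ℝ)^2) * N ≤ 1 * N := mul_le_mul_of_nonneg_right h3 (Nat.cast_nonneg _)
    nlinarith
  -- a maximal such family `F` satisfies `F + D = ℤ`
  obtain ⟨F, hF, hmax⟩ : ∃ F : Finset ℤ, (∀ i ∈ F, ∀ j ∈ F, i ≠ j → i - j ∉ D) ∧
      ∀ G : Finset ℤ, (∀ i ∈ G, ∀ j ∈ G, i ≠ j → i - j ∉ D) → G.card ≤ F.card := by
    set P : ℕ → Prop := fun m => ∃ F : Finset ℤ,
      (∀ i ∈ F, ∀ j ∈ F, i ≠ j → i - j ∉ D) ∧ F.card = m with hP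
    have hP0 : P 0 := ⟨∅, by simp, rfl⟩
    obtain ⟨F, hF, hFm⟩ := Nat.findGreatest_spec (P := P) (Nat.zero_le r) hP0
    refine ⟨F, hF, fun G hG => ?_⟩
    rw [hFm]
    exact Nat.le_findGreatest (hfam G hG) ⟨G, hG, rfl⟩
  have hDneg : ∀ k, k ∈ D → -k ∈ D := by
    intro k hk
    simp only [hD, Set.mem_ofPred_eq, hcsymm] at hk ⊢
    exact hk
  have hcover : ∀ k : ℤ, ∃ i ∈ F, k - i ∈ D := by
    intro k
    by_contra! h
    have hkF : k ∉ F := fun hk => h k hk (by simpa using hD0)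
    have := hmax (insert k F) (by
      intro i hi j hj hij
      rw [Finset.mem_insert] at hi hj
      rcases hi with rfl | hi <;> rcases hj with rfl | hj
      · exact absurd rfl hij
      · exact h j hj
      · intro h'
        apply h i hi
        have := hDneg _ h'
        rwa [neg_sub] at this
      · exact hF i hi j hj hij)
    rw [Finset.card_insert_of_notMem hkF] at this
    omega
  obtain ⟨L, hL⟩ : ∃ L : ℕ, ∀ i ∈ F, |i| ≤ L := by
    refine ⟨∑ i ∈ F, i.natAbs, fun i hi => ?_⟩
    rw [Int.abs_eq_natAbs]
    exact_mod_cast Finset.single_le_sum (f := Int.natAbs) (fun _ _ => Nat.zero_le _) hi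
  obtain ⟨C, hC0, hC⟩ := hC (2 * L)
  have hsum : Summable fun k => C * ∑ i ∈ F, D.indicator w (k + (L - i)) := by
    refine Summable.mul_left _ (summable_sum fun i _ => ?_)
    exact (Equiv.addRight ((L:ℤ) - i)).summable_iff.2 hDsummable
  refine Summable.of_nonneg_of_le hw (fun k => ?_) hsum
  obtain ⟨i, hi, hki⟩ := hcover (k + L)
  have hLi := abs_le.1 (hL i hi)
  have hki' : k + (L - i) ∈ D := by rwa [← add_sub_assoc]
  refine le_trans (hC k (k + (L - i)) (by omega) (by push_cast; omega)) ?_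
  refine mul_le_mul_of_nonneg_left ?_ hC0.le
  have : w (k + (L - i)) = D.indicator w (k + (L - i)) := by rw [Set.indicator_of_mem hki']
  rw [this]
  exact Finset.single_le_sum (f := fun i => D.indicator w (k + (L - i)))
    (fun _ _ => Set.indicator_nonneg (fun _ _ => hw _) _) hi

/-! ### Consequences of approximating the indicator of the unit interval -/

/-- The growth condition in a form that is uniform over bounded windows. -/
theorem Admissible.bound {ρ : ℝ → ℝ} (hρ : Admissible ρ) {R : ℝ} (hR : 0 ≤ R) :
    ∃ C : ℝ, 1 ≤ C ∧ ∀ a b, a ≤ b → b ≤ a + R → ρ a ≤ C * ρ b := by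
  obtain ⟨-, hpos, M, hM, ω, h⟩ := hρ
  have hC1 : 1 ≤ M * Real.exp (|ω| * R) := by
    have : 1 ≤ Real.exp (|ω| * R) := Real.one_le_exp (by positivity)
    nlinarith
  refine ⟨M * Real.exp (|ω| * R), hC1, fun a b hab hb => ?_⟩
  rcases hab.eq_or_lt with rfl | hlt
  · nlinarith [hpos a]
  · have h1 := h a (b - a) (sub_pos.2 hlt)
    rw [add_sub_cancel] at h1
    refine h1.trans (mul_le_mul_of_nonneg_right ?_ (hpos b).le)
    refine mul_le_mul_of_nonneg_left (Real.exp_le_exp.2 ?_) (by linarith)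
    calc ω * (b - a) ≤ |ω| * (b - a) :=
          mul_le_mul_of_nonneg_right (le_abs_self _) (by linarith)
      _ ≤ |ω| * R := mul_le_mul_of_nonneg_left (by linarith) (abs_nonneg _)

theorem integrable_of_summable {ρ : ℝ → ℝ} (hρ : Admissible ρ)
    (hs : Summable fun k : ℤ => ρ k) : Integrable ρ := by
  obtain ⟨C, hC, hb⟩ := hρ.bound (R := 1) zero_le_one
  have hpos := hρ.2.1
  refine ⟨hρ.1.aestronglyMeasurable, ?_⟩
  rw [hasFiniteIntegral_iff_ofReal (ae_of_all _ fun x => (hpos x).le)]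
  rw [← setLIntegral_univ, ← iUnion_Ioc_intCast ℝ,
    lintegral_iUnion (fun n : ℤ => measurableSet_Ioc) (Set.pairwise_disjoint_Ioc_intCast ℝ)]
  have hs' : Summable fun n : ℤ => C * ρ ((n + 1 : ℤ) : ℝ) :=
    ((Equiv.addRight (1:ℤ)).summable_iff.2 hs).mul_left C
  refine lt_of_le_of_lt ?_ hs'.tsum_ofReal_lt_top
  refine ENNReal.tsum_le_tsum fun n => ?_
  calc ∫⁻ x in Set.Ioc (n:ℝ) (n+1), ENNReal.ofReal (ρ x)
      ≤ ∫⁻ x in Set.Ioc (n:ℝ) (n+1), ENNReal.ofReal (C * ρ ((n + 1 : ℤ) : ℝ)) := by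
        refine setLIntegral_mono measurable_const fun x hx => ?_
        refine ENNReal.ofReal_le_ofReal (hb x _ ?_ ?_) <;> push_cast <;> linarith [hx.1, hx.2]
    _ = _ := by
        rw [setLIntegral_const, Real.volume_Ioc]; simp

theorem rpow_abs_le {p : ℝ} (hp : 0 ≤ p) (a b : ℝ) :
    |a| ^ p ≤ 2 ^ p * (|a - b| ^ p + |b| ^ p) := by
  have h : |a| ≤ 2 * max |a - b| |b| := by
    have := abs_add_le (a - b) b
    rw [sub_add_cancel] at this
    have h1 := le_max_left |a - b| |b|
    have h2 := le_max_right |a - b| |b|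
    linarith
  have h0 : 0 ≤ |a - b| ^ p := by positivity
  have h0' : 0 ≤ |b| ^ p := by positivity
  refine (Real.rpow_le_rpow (abs_nonneg _) h hp).trans ?_
  rw [Real.mul_rpow (by norm_num) (le_max_of_le_left (abs_nonneg _))]
  refine mul_le_mul_of_nonneg_left ?_ (by positivity)
  rcases max_cases |a - b| |b| with ⟨h, _⟩ | ⟨h, _⟩ <;> rw [h] <;> linarith

/-- The indicator function of `[0, 1]`, the target used for the necessity of summability. -/
noncomputable def bump : ℝ → ℝ := Set.indicator (Set.Icc 0 1) fun _ => 1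

theorem measurable_bump : Measurable bump := measurable_const.indicator measurableSet_Icc

theorem memLpRho_bump {p : ℝ} (hp : 1 ≤ p) {ρ : ℝ → ℝ} (hρ : Admissible ρ) :
    MemLpRho p ρ bump := by
  refine ⟨measurable_bump, ?_⟩
  obtain ⟨C, hC, hb⟩ := hρ.bound (R := 1) zero_le_one
  have : ∀ x, ENNReal.ofReal (|bump x| ^ p * ρ x) ≤
      (Set.Icc (0:ℝ) 1).indicator (fun _ => ENNReal.ofReal (C * ρ 1)) x := by
    intro x
    by_cases hx : x ∈ Set.Icc (0:ℝ) 1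
    · simp only [bump, Set.indicator_of_mem hx, abs_one, Real.one_rpow, one_mul]
      exact ENNReal.ofReal_le_ofReal (hb _ _ hx.2 (by linarith [hx.1]))
    · simp [bump, Set.indicator_of_notMem hx, Real.zero_rpow (by linarith : p ≠ 0)]
  refine (lintegral_mono this).trans_lt ?_
  rw [lintegral_indicator measurableSet_Icc, setLIntegral_const, Real.volume_Icc]
  exact ENNReal.mul_lt_top ENNReal.ofReal_lt_top ENNReal.ofReal_lt_top

/-- The windows `[m, m + 2)` cover each point at most twice. -/
theorem tsum_window_le (F : ℝ → ENNReal) :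
    ∑' m : ℕ, ∫⁻ x in Set.Ico (m:ℝ) (m+2), F x ≤ 2 * ∫⁻ x, F x := by
  have hsplit : ∀ m : ℕ, ∫⁻ x in Set.Ico (m:ℝ) (m+2), F x ≤
      (∫⁻ x in Set.Ico (m:ℝ) (m+1), F x) + ∫⁻ x in Set.Ico ((m + 1 : ℕ):ℝ) ((m+1 : ℕ)+1), F x := by
    intro m
    have : Set.Ico (m:ℝ) (m+2) = Set.Ico (m:ℝ) (m+1) ∪ Set.Ico ((m + 1 : ℕ):ℝ) ((m+1 : ℕ)+1) := by
      push_cast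
      rw [Set.Ico_union_Ico_eq_Ico (by linarith) (by linarith)]
      congr 1; ring
    rw [this]
    exact lintegral_union_le _ _ _
  have hdisj : Pairwise (Function.onFun Disjoint fun m : ℕ => Set.Ico (m:ℝ) (m+1)) := by
    intro a b hab
    have := Set.pairwise_disjoint_Ico_intCast ℝ (i := (a:ℤ)) (j := (b:ℤ)) (by exact_mod_cast hab)
    simpa [Function.onFun] using this
  have h1 : ∑' m : ℕ, ∫⁻ x in Set.Ico (m:ℝ) (m+1), F x ≤ ∫⁻ x, F x := by
    rw [← lintegral_iUnion (fun n : ℕ => measurableSet_Ico) hdisj]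
    exact setLIntegral_le_lintegral _ _
  calc _ ≤ _ := ENNReal.tsum_le_tsum hsplit
    _ = _ := ENNReal.tsum_add
    _ ≤ (∫⁻ x, F x) + ∫⁻ x, F x := by
      refine add_le_add h1 (le_trans ?_ h1)
      exact ENNReal.tsum_comp_le_tsum_of_injective (add_left_injective 1)
        (fun m : ℕ => ∫⁻ x in Set.Ico (m:ℝ) (m+1), F x)
    _ = _ := (two_mul _).symm

/-- If, for some `f`, the translates `T_t f` come `ε`-close to `bump` with `t` in a set of integer
cells of positive lower density, then `ρ` is summable. For two such times `t`, `t'`, the function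
`|f| ^ p` has mass at least `2 ^ (-p) / 2` on `[t', t' + 1]`, while its integral against `ρ (· - t)`
is bounded; hence the sum of `ρ (t' - t)` over `t'` is bounded uniformly in `t`, and
`summable_of_density` applies. -/
theorem exists_eps_summable {p : ℝ} (hp : 1 ≤ p) {ρ : ℝ → ℝ} (hρ : Admissible ρ) :
    ∃ ε : ℝ, 0 < ε ∧ ∀ f : ℝ → ℝ, Measurable f → ∀ A : Set ℕ, ∀ δ : ℝ, 0 < δ →
      ∀ _ : DecidablePred (· ∈ A),
      (∀ n ∈ A, ∃ t : ℝ, n ≤ t ∧ t < n + 1 ∧ TransLpClose p ρ f bump t ε) →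
      (∀ᶠ N : ℕ in atTop, δ * N ≤ (((Finset.range N).filter (· ∈ A)).card : ℝ)) →
      Summable fun k : ℤ => ρ k := by
  have hpos := hρ.2.1
  have hp0 : 0 < p := by linarith
  obtain ⟨C, hC, hb⟩ := hρ.bound (R := 1) zero_le_one
  have h2p : (0:ℝ) < 2 ^ p := by positivity
  set c : ℝ := ρ 0 / C with hc
  have hc0 : 0 < c := div_pos (hpos 0) (by linarith)
  have hcx : ∀ x ∈ Set.Icc (0:ℝ) 1, c ≤ ρ x := fun x hx => by
    rw [hc, div_le_iff₀ (by linarith), mul_comm]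
    exact hb _ _ hx.1 (by linarith [hx.2])
  set q : ℝ := c / (2 * 2 ^ p) with hq
  have hq0 : 0 < q := by positivity
  refine ⟨q ^ (1/p), by positivity, ?_⟩
  intro f hf A δ hδ _ hAt hA
  have hqp : (q ^ (1/p)) ^ p = q := by
    rw [← Real.rpow_mul hq0.le, one_div_mul_cancel hp0.ne', Real.rpow_one]
  simp only [TransLpClose, hqp] at hAt
  set F : ℝ → ENNReal := fun x => ENNReal.ofReal (|f x| ^ p) with hF
  have hFm : Measurable F := (hf.abs.pow_const p).ennreal_ofReal
  -- mass of `|f| ^ p` near `t`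
  have hlow : ∀ t : ℝ, (∫⁻ x : ℝ, ENNReal.ofReal (|f (x + t) - bump x| ^ p * ρ x)) ≤
      ENNReal.ofReal q → 1 / 2 ≤ ENNReal.ofReal (2 ^ p) * ∫⁻ x in Set.Icc t (t + 1), F x := by
    intro t ht
    have hshift : ∫⁻ x in Set.Icc t (t + 1), F x = ∫⁻ x in Set.Icc 0 1, F (x + t) := by
      have := (measurePreserving_add_right volume t).setLIntegral_comp_preimage
        (s := Set.Icc t (t+1)) measurableSet_Icc hFm
      rw [← this]
      congr 2
      simp
    have h1 : (∫⁻ x in Set.Icc (0:ℝ) 1, ENNReal.ofReal (|f (x + t) - 1| ^ p)) * ENNReal.ofReal c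
        ≤ ENNReal.ofReal q := by
      rw [← lintegral_mul_const' _ _ ENNReal.ofReal_ne_top]
      refine le_trans (le_trans ?_ (setLIntegral_le_lintegral (Set.Icc (0:ℝ) 1) _)) ht
      refine setLIntegral_mono' measurableSet_Icc fun x hx => ?_
      rw [← ENNReal.ofReal_mul (by positivity)]
      simp only [bump, Set.indicator_of_mem hx]
      exact ENNReal.ofReal_le_ofReal (mul_le_mul_of_nonneg_left (hcx x hx) (by positivity))
    have h2 : (1:ENNReal) ≤ ENNReal.ofReal (2 ^ p) * (∫⁻ x in Set.Icc (0:ℝ) 1, F (x + t)) +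
        ENNReal.ofReal (2 ^ p) *
          (∫⁻ x in Set.Icc (0:ℝ) 1, ENNReal.ofReal (|f (x + t) - 1| ^ p)) := by
      rw [← mul_add, ← lintegral_add_left (show Measurable fun x => F (x + t) from
          hFm.comp (measurable_add_const t)),
        ← lintegral_const_mul' _ _ ENNReal.ofReal_ne_top]
      have : (1:ENNReal) = ∫⁻ x in Set.Icc (0:ℝ) 1, 1 := by simp
      rw [this]
      refine lintegral_mono fun x => ?_
      rw [← ENNReal.ofReal_one, hF, ← ENNReal.ofReal_add (by positivity) (by positivity),
        ← ENNReal.ofReal_mul h2p.le]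
      refine ENNReal.ofReal_le_ofReal ?_
      have := rpow_abs_le hp0.le 1 (f (x + t))
      rw [abs_one, Real.one_rpow, abs_sub_comm] at this
      linarith
    have h3 : ENNReal.ofReal (2 ^ p) *
          (∫⁻ x in Set.Icc (0:ℝ) 1, ENNReal.ofReal (|f (x + t) - 1| ^ p)) ≤ 1 / 2 := by
      have h4 : (∫⁻ x in Set.Icc (0:ℝ) 1, ENNReal.ofReal (|f (x + t) - 1| ^ p)) ≤
          ENNReal.ofReal (q / c) := by
        rw [ENNReal.ofReal_div_of_pos hc0]
        rw [ENNReal.le_div_iff_mul_le (Or.inl (by simpa using hc0)) (Or.inl ENNReal.ofReal_ne_top)]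
        exact h1
      refine (mul_le_mul_right h4 _).trans ?_
      rw [← ENNReal.ofReal_mul h2p.le]
      have : 2 ^ p * (q / c) = 1 / 2 := by rw [hq]; field_simp
      rw [this, ENNReal.ofReal_div_of_pos two_pos]
      simp
    rw [hshift]
    have h5 := h2.trans (add_le_add_right h3 _)
    have h6 : (1:ENNReal) / 2 + 1 / 2 = 1 := ENNReal.add_halves 1
    refine (ENNReal.add_le_add_iff_right (a := 1 / 2) (by simp)).1 ?_
    rwa [h6]
  -- total weighted mass of `|f| ^ p` seen from `t`
  set K₀ : ENNReal := ENNReal.ofReal (2 ^ p) * (ENNReal.ofReal q +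
    ∫⁻ x : ℝ, ENNReal.ofReal (|bump x| ^ p * ρ x)) with hK₀
  have hK₀t : K₀ < ⊤ := ENNReal.mul_lt_top ENNReal.ofReal_lt_top
    (ENNReal.add_lt_top.2 ⟨ENNReal.ofReal_lt_top, (memLpRho_bump hp hρ).2⟩)
  have hup : ∀ t : ℝ, (∫⁻ x : ℝ, ENNReal.ofReal (|f (x + t) - bump x| ^ p * ρ x)) ≤
      ENNReal.ofReal q → ∫⁻ x, F x * ENNReal.ofReal (ρ (x - t)) ≤ K₀ := by
    intro t ht
    have hshift : ∫⁻ x, F x * ENNReal.ofReal (ρ (x - t)) =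
        ∫⁻ x, F (x + t) * ENNReal.ofReal (ρ x) := by
      rw [← lintegral_add_right_eq_self (fun x => F x * ENNReal.ofReal (ρ (x - t))) t]
      simp
    rw [hshift, hK₀]
    refine le_trans ?_ (mul_le_mul_right (add_le_add_left ht _) _)
    have hm1 : Measurable fun x => ENNReal.ofReal (|bump x| ^ p * ρ x) :=
      ((measurable_bump.abs.pow_const p).mul hρ.1).ennreal_ofReal
    rw [← lintegral_add_right _ hm1, ← lintegral_const_mul' _ _ ENNReal.ofReal_ne_top]
    refine lintegral_mono fun x => ?_
    have := (hpos x).le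
    rw [hF, ← ENNReal.ofReal_add (by positivity) (by positivity), ← ENNReal.ofReal_mul h2p.le,
      ← ENNReal.ofReal_mul (by positivity)]
    refine ENNReal.ofReal_le_ofReal ?_
    rw [← add_mul, ← mul_assoc]
    exact mul_le_mul_of_nonneg_right (rpow_abs_le hp0.le _ _) this
  obtain ⟨C', hC', hb'⟩ := hρ.bound (R := 3) (by norm_num)
  set K₁ : ENNReal := 2 * (ENNReal.ofReal (2 ^ p * C') * (2 * K₀)) with hK₁
  have hK₁t : K₁ ≠ ⊤ := by
    refine ENNReal.mul_ne_top (by simp) (ENNReal.mul_ne_top ENNReal.ofReal_ne_top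
      (ENNReal.mul_ne_top (by simp) hK₀t.ne))
  -- cells are `[m, m + 1)`, so `x - tn` for `x ∈ [m, m + 2)` lies in `[m - n - 1, m - n + 2]`;
  -- this is why the weight is taken at `k - 1` and compared over windows of length `3`
  have hsum := summable_of_density (A := A) hδ hA (w := fun k : ℤ => ρ ((k - 1 : ℤ) : ℝ))
    (fun k => (hpos _).le) (fun R => by
      obtain ⟨C, hC, hb⟩ := hρ.bound (R := R) (Nat.cast_nonneg _)
      refine ⟨C, by linarith, fun k l hkl hl => hb _ _ ?_ ?_⟩
      · exact_mod_cast sub_le_sub_right hkl 1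
      · have : l - 1 ≤ k - 1 + R := by omega
        exact_mod_cast this) (K := K₁.toReal) (by
      intro n hn S hS
      obtain ⟨tn, htn1, htn2, htn⟩ := hAt n hn
      rw [← ENNReal.ofReal_le_iff_le_toReal hK₁t,
        ENNReal.ofReal_sum_of_nonneg (fun _ _ => (hpos _).le)]
      have hm : ∀ m ∈ S, ENNReal.ofReal (ρ ((((m:ℤ) - n - 1 : ℤ)) : ℝ)) ≤
          2 * (ENNReal.ofReal (2 ^ p * C') *
            ∫⁻ x in Set.Ico (m:ℝ) (m+2), F x * ENNReal.ofReal (ρ (x - tn))) := by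
        intro m hm
        obtain ⟨tm, htm1, htm2, htm⟩ := hAt m (hS m hm)
        have h1 := hlow tm htm
        have h2 : ∫⁻ x in Set.Icc tm (tm + 1), F x ≤ ∫⁻ x in Set.Ico (m:ℝ) (m+2), F x := by
          refine lintegral_mono_set fun x hx => ⟨?_, ?_⟩ <;> linarith [hx.1, hx.2]
        set a := ENNReal.ofReal (ρ ((((m:ℤ) - n - 1 : ℤ)) : ℝ)) with ha
        have h3 : a * ∫⁻ x in Set.Ico (m:ℝ) (m+2), F x ≤ ENNReal.ofReal C' *
            ∫⁻ x in Set.Ico (m:ℝ) (m+2), F x * ENNReal.ofReal (ρ (x - tn)) := by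
          rw [← lintegral_const_mul' _ _ ENNReal.ofReal_ne_top,
            ← lintegral_const_mul' _ _ ENNReal.ofReal_ne_top]
          refine setLIntegral_mono' measurableSet_Ico fun x hx => ?_
          rw [mul_left_comm, mul_comm, ← ENNReal.ofReal_mul (by linarith : 0 ≤ C')]
          refine mul_le_mul_right (ENNReal.ofReal_le_ofReal (hb' _ _ ?_ ?_)) _ <;> push_cast <;>
            linarith [hx.1, hx.2]
        calc a = a * (2 * (1 / 2)) := by
              rw [one_div, ENNReal.mul_inv_cancel (by simp) (by simp), mul_one]
          _ ≤ a * (2 * (ENNReal.ofReal (2 ^ p) * ∫⁻ x in Set.Ico (m:ℝ) (m+2), F x)) := by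
              gcongr
              exact h1.trans (by gcongr)
          _ = 2 * (ENNReal.ofReal (2 ^ p) * (a * ∫⁻ x in Set.Ico (m:ℝ) (m+2), F x)) := by ring
          _ ≤ 2 * (ENNReal.ofReal (2 ^ p) * (ENNReal.ofReal C' *
            ∫⁻ x in Set.Ico (m:ℝ) (m+2), F x * ENNReal.ofReal (ρ (x - tn)))) := by gcongr
          _ = _ := by rw [ENNReal.ofReal_mul h2p.le]; ring
      refine (Finset.sum_le_sum hm).trans ?_
      rw [← Finset.mul_sum, ← Finset.mul_sum, hK₁]
      gcongr
      refine (ENNReal.sum_le_tsum S).trans ((tsum_window_le _).trans ?_)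
      gcongr
      exact hup tn htn)
  have := (Equiv.addRight (1:ℤ)).summable_iff.2 hsum
  simpa [Function.comp_def] using this

/-! ### Necessity of summability -/

/-- A set of times of positive lower density meets a set of integer cells of positive lower
density. -/
theorem eventually_card_of_ldensR_pos {E : Set ℝ} (hE : 0 < ldensR E) (A : Set ℕ)
    [DecidablePred (· ∈ A)] (hA : ∀ t ∈ E, 0 ≤ t → ⌊t⌋₊ ∈ A) :
    ∃ δ : ℝ, 0 < δ ∧
      ∀ᶠ N : ℕ in atTop, δ * N ≤ (((Finset.range N).filter (· ∈ A)).card : ℝ) := by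
  obtain ⟨δ, hδ0, hδ⟩ := exists_between hE
  have hev : ∀ᶠ N : ℝ in atTop, δ < (volume (E ∩ Set.Icc 0 N)).toReal / N := by
    refine eventually_lt_of_lt_liminf hδ ⟨0, ?_⟩
    rw [eventually_map]
    filter_upwards [eventually_ge_atTop 0] with N hN
    positivity
  refine ⟨δ / 2, by positivity, ?_⟩
  filter_upwards [tendsto_natCast_atTop_atTop.eventually hev,
    tendsto_natCast_atTop_atTop.eventually (eventually_gt_atTop (2 / δ))] with N hN hN2
  have hN0 : (0:ℝ) < N := lt_trans (by positivity) hN2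
  rw [lt_div_iff₀ hN0] at hN
  rw [div_lt_iff₀ hδ0] at hN2
  set T := (Finset.range (N+1)).filter (· ∈ A) with hT
  have hvol : volume (E ∩ Set.Icc (0:ℝ) N) ≤ T.card := by
    have hsub : E ∩ Set.Icc (0:ℝ) N ⊆ ⋃ n ∈ T, Set.Icc (n:ℝ) (n+1) := by
      rintro t ⟨htE, ht⟩
      simp only [Set.mem_iUnion]
      refine ⟨⌊t⌋₊, ?_, Nat.floor_le ht.1, (Nat.lt_floor_add_one t).le⟩
      rw [hT, Finset.mem_filter, Finset.mem_range, Nat.lt_succ_iff]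
      exact ⟨by simpa using Nat.floor_mono ht.2, hA t htE ht.1⟩
    refine (measure_mono hsub).trans ((measure_biUnion_finset_le _ _).trans ?_)
    simp
  have h1 : (volume (E ∩ Set.Icc (0:ℝ) N)).toReal ≤ T.card := by
    have := ENNReal.toReal_mono (ENNReal.natCast_ne_top _) hvol
    simpa using this
  have h2 : T.card ≤ ((Finset.range N).filter (· ∈ A)).card + 1 := by
    rw [hT, Finset.range_add_one, Finset.filter_insert]
    split_ifs
    · exact Finset.card_insert_le _ _
    · omega
  have h3 : (T.card : ℝ) ≤ (((Finset.range N).filter (· ∈ A)).card : ℝ) + 1 := by exact_mod_cast h2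
  nlinarith

theorem summable_of_FH {p : ℝ} (hp : 1 ≤ p) {ρ : ℝ → ℝ} (hρ : Admissible ρ)
    (h : FHTransLp p ρ) : Summable fun k : ℤ => ρ k := by
  classical
  obtain ⟨ε, hε, H⟩ := exists_eps_summable hp hρ
  obtain ⟨f, hf, hd⟩ := h
  have := hd bump (memLpRho_bump hp hρ) ε hε
  set A : Set ℕ := {n | ∃ t : ℝ, n ≤ t ∧ t < n + 1 ∧ TransLpClose p ρ f bump t ε} with hA
  obtain ⟨δ, hδ, hev⟩ := eventually_card_of_ldensR_pos this A fun t ht _ =>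
    ⟨t, Nat.floor_le ht.1, Nat.lt_floor_add_one t, ht.2⟩
  exact H f hf.1 A δ hδ _ (fun n hn => hn) hev

theorem ae_eq_translate_nsmul {f : ℝ → ℝ} {t : ℝ} (h : ∀ᵐ x, f (x + t) = f x) (n : ℕ) :
    ∀ᵐ x, f (x + n * t) = f x := by
  induction n with
  | zero => simp
  | succ n ih =>
    have h2 := (measurePreserving_add_right volume ((n:ℝ) * t)).quasiMeasurePreserving.ae h
    filter_upwards [h2, ih] with x h1 h2
    rw [← h2, ← h1]
    congr 1; push_cast; ring

/-- A single periodic function close to `bump` suffices: it is close to `bump` again at all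
multiples `l * s` of a period `s > 1`, and these lie in distinct integer cells. -/
theorem summable_of_chaotic {p : ℝ} (hp : 1 ≤ p) {ρ : ℝ → ℝ} (hρ : Admissible ρ)
    (h : ChaoticTransLp p ρ) : Summable fun k : ℤ => ρ k := by
  classical
  obtain ⟨ε, hε, H⟩ := exists_eps_summable hp hρ
  obtain ⟨f, hf, ⟨t, ht, hper⟩, hclose⟩ := h.2 bump (memLpRho_bump hp hρ) ε hε
  have hfm := hf.1
  have hae : ∀ᵐ x, f (x + t) = f x := by
    rw [lintegral_eq_zero_iff] at hper
    · filter_upwards [hper] with x hx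
      have h1 : |f (x + t) - f x| ^ p * ρ x ≤ 0 := by simpa using hx
      have h2 : |f (x + t) - f x| ^ p ≤ 0 := by
        by_contra! h'
        have := mul_pos h' (hρ.2.1 x)
        linarith
      have h3 : |f (x + t) - f x| ^ p = 0 := le_antisymm h2 (by positivity)
      rw [Real.rpow_eq_zero (abs_nonneg _) (by linarith), abs_eq_zero] at h3
      linarith
    · exact (((((hfm.comp (measurable_add_const t)).sub hfm).abs).pow_const p).mul
        hρ.1).ennreal_ofReal
  obtain ⟨k, hk⟩ := exists_nat_gt (1 / t)
  rw [div_lt_iff₀ ht] at hk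
  set s : ℝ := k * t with hs
  have hs0 : 0 < s := by linarith
  have hcl : ∀ l : ℕ, TransLpClose p ρ f bump (l * s) ε := by
    intro l
    refine le_trans (le_of_eq (lintegral_congr_ae ?_)) hclose
    filter_upwards [ae_eq_translate_nsmul hae (l * k)] with x hx
    have : (l:ℝ) * s = ((l * k : ℕ) : ℝ) * t := by rw [hs]; push_cast; ring
    rw [this, hx]
  set A : Set ℕ := Set.range fun l : ℕ => ⌊(l:ℝ) * s⌋₊ with hA
  refine H f hfm A (1 / (2 * s)) (by positivity) (Classical.decPred _) ?_ ?_
  · rintro _ ⟨l, rfl⟩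
    exact ⟨l * s, Nat.floor_le (by positivity), Nat.lt_floor_add_one _, hcl l⟩
  · filter_upwards [tendsto_natCast_atTop_atTop.eventually (eventually_ge_atTop (2 * s))] with N hN
    have hcard : ⌊(N:ℝ) / s⌋₊ ≤ ((Finset.range N).filter (· ∈ A)).card := by
      rw [← Finset.card_range ⌊(N:ℝ) / s⌋₊]
      refine Finset.card_le_card_of_injOn (fun l : ℕ => ⌊(l:ℝ) * s⌋₊) ?_ ?_
      · intro l hl
        simp only [Finset.coe_range, Set.mem_Iio] at hl
        simp only [Finset.coe_filter, Finset.mem_range]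
        refine ⟨?_, l, rfl⟩
        rw [Nat.floor_lt (by positivity)]
        have : (l:ℝ) < N / s := by
          by_contra! h'
          exact absurd hl (not_lt.2 (Nat.floor_le_of_le h'))
        rwa [lt_div_iff₀ hs0] at this
      · refine (strictMono_nat_of_lt_succ fun l => ?_).injective.injOn
        rw [← Nat.succ_le_iff, Nat.succ_eq_add_one, ← Nat.floor_add_one (by positivity)]
        refine Nat.floor_mono ?_
        push_cast
        linarith
    have h1 : (N:ℝ) / s < ⌊(N:ℝ) / s⌋₊ + 1 := Nat.lt_floor_add_one _
    have h2 : (⌊(N:ℝ) / s⌋₊ : ℝ) ≤ ((Finset.range N).filter (· ∈ A)).card := by exact_mod_cast hcard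
    have h3 : 2 ≤ (N:ℝ) / s := by rwa [le_div_iff₀ hs0]
    have h4 : 1 / (2 * s) * N = (N / s) / 2 := by field_simp
    rw [h4]
    convert (show (N:ℝ) / s / 2 ≤ ((Finset.range N).filter (· ∈ A)).card by linarith) using 1

/-! ### The weighted space as an `L^p` space -/

/-- The measure `ρ(x) dx`, so that `L_p^ρ(ℝ)` is the usual `L^p` space of `wMeas ρ`. -/
noncomputable def wMeas (ρ : ℝ → ℝ) : Measure ℝ := volume.withDensity fun x => ENNReal.ofReal (ρ x)

theorem eLpNorm_wMeas {p : ℝ} (hp : 1 ≤ p) {ρ : ℝ → ℝ} (hρ : Admissible ρ) {u : ℝ → ℝ}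
    (hu : Measurable u) :
    eLpNorm u (ENNReal.ofReal p) (wMeas ρ) = (∫⁻ x, ENNReal.ofReal (|u x| ^ p * ρ x)) ^ (1 / p) := by
  have hp0 : 0 < p := by linarith
  rw [eLpNorm_eq_lintegral_rpow_enorm_toReal (by simpa using hp0) ENNReal.ofReal_ne_top,
    ENNReal.toReal_ofReal hp0.le, wMeas,
    lintegral_withDensity_eq_lintegral_mul _ hρ.1.ennreal_ofReal (by fun_prop)]
  congr 2
  ext x
  rw [Pi.mul_apply, Real.enorm_eq_ofReal_abs, ENNReal.ofReal_rpow_of_nonneg (abs_nonneg _) hp0.le,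
    mul_comm, ENNReal.ofReal_mul (by positivity)]

/-- Translation between the `p`-th power form of closeness and the norm inequality. -/
theorem lintegral_le_iff {p : ℝ} (hp : 1 ≤ p) {ρ : ℝ → ℝ} (hρ : Admissible ρ) {u : ℝ → ℝ}
    (hu : Measurable u) {ε : ℝ} (hε : 0 ≤ ε) :
    (∫⁻ x, ENNReal.ofReal (|u x| ^ p * ρ x)) ≤ ENNReal.ofReal (ε ^ p) ↔
      eLpNorm u (ENNReal.ofReal p) (wMeas ρ) ≤ ENNReal.ofReal ε := by
  have hp0 : 0 < p := by linarith
  rw [eLpNorm_wMeas hp hρ hu, one_div, ENNReal.rpow_inv_le_iff hp0,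
    ENNReal.ofReal_rpow_of_nonneg hε hp0.le]

theorem memLpRho_iff {p : ℝ} (hp : 1 ≤ p) {ρ : ℝ → ℝ} (hρ : Admissible ρ) {u : ℝ → ℝ} :
    MemLpRho p ρ u ↔ Measurable u ∧ eLpNorm u (ENNReal.ofReal p) (wMeas ρ) < ⊤ := by
  have hp0 : 0 < p := by linarith
  refine and_congr_right fun hu => ?_
  rw [eLpNorm_wMeas hp hρ hu, ENNReal.rpow_lt_top_iff_of_pos (by positivity)]

theorem MemLpRho.memLp {p : ℝ} (hp : 1 ≤ p) {ρ : ℝ → ℝ} (hρ : Admissible ρ) {u : ℝ → ℝ}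
    (hu : MemLpRho p ρ u) : MemLp u (ENNReal.ofReal p) (wMeas ρ) :=
  ⟨hu.1.aestronglyMeasurable, ((memLpRho_iff hp hρ).1 hu).2⟩

theorem isFiniteMeasure_wMeas {ρ : ℝ → ℝ} (hi : Integrable ρ) : IsFiniteMeasure (wMeas ρ) :=
  isFiniteMeasure_withDensity_ofReal hi.2

/-- Dominated convergence for functions that vanish eventually at each point. -/
theorem tendsto_eLpNorm_zero {p : ℝ} (hp : 1 ≤ p) {ρ : ℝ → ℝ} (hρ : Admissible ρ)
    {u : ℕ → ℝ → ℝ} {G : ℝ → ℝ} (hu : ∀ n, Measurable (u n)) (hG : MemLpRho p ρ G)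
    (hb : ∀ n x, |u n x| ≤ |G x|) (h0 : ∀ x, ∀ᶠ n in atTop, u n x = 0) :
    Tendsto (fun n => eLpNorm (u n) (ENNReal.ofReal p) (wMeas ρ)) atTop (nhds 0) := by
  have hp0 : 0 < p := by linarith
  have h1 : Tendsto (fun n => ∫⁻ x, ENNReal.ofReal (|u n x| ^ p * ρ x)) atTop
      (nhds (∫⁻ _ : ℝ, 0)) := by
    refine tendsto_lintegral_of_dominated_convergence
      (fun x => ENNReal.ofReal (|G x| ^ p * ρ x)) (fun n => ?_) (fun n => ae_of_all _ fun x => ?_)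
      hG.2.ne (ae_of_all _ fun x => ?_)
    · exact (((hu n).abs.pow_const p).mul hρ.1).ennreal_ofReal
    · refine ENNReal.ofReal_le_ofReal (mul_le_mul_of_nonneg_right ?_ (hρ.2.1 x).le)
      exact Real.rpow_le_rpow (abs_nonneg _) (hb n x) hp0.le
    · refine tendsto_const_nhds.congr' ?_
      filter_upwards [h0 x] with n hn
      simp [hn, Real.zero_rpow hp0.ne']
  rw [lintegral_zero] at h1
  have h2 := (ENNReal.continuous_rpow_const (y := 1 / p)).tendsto 0 |>.comp h1
  rw [ENNReal.zero_rpow_of_pos (by positivity)] at h2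
  refine h2.congr fun n => ?_
  rw [eLpNorm_wMeas hp hρ (hu n)]; rfl

theorem memLpRho_of_bounded {p : ℝ} (hp : 1 ≤ p) {ρ : ℝ → ℝ} (hρ : Admissible ρ)
    (hi : Integrable ρ) {u : ℝ → ℝ} (hu : Measurable u) {M : ℝ} (hM : ∀ x, |u x| ≤ M) :
    MemLpRho p ρ u := by
  have := isFiniteMeasure_wMeas hi
  rw [memLpRho_iff hp hρ]
  exact ⟨hu, (MemLp.of_bound hu.aestronglyMeasurable M (ae_of_all _ hM)).2⟩

/-- Truncation of `g` in height to `[-M, M]` and in space to `[-R, R]`. -/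
noncomputable def clip (M R : ℝ) (g : ℝ → ℝ) (x : ℝ) : ℝ :=
  if |x| ≤ R then max (-M) (min M (g x)) else 0

theorem measurable_clip {M R : ℝ} {g : ℝ → ℝ} (hg : Measurable g) : Measurable (clip M R g) := by
  unfold clip
  refine Measurable.ite (measurableSet_le (by fun_prop) (by fun_prop)) ?_ measurable_const
  exact measurable_const.max (measurable_const.min hg)

theorem abs_clip_le {M R : ℝ} (hM : 0 ≤ M) (g : ℝ → ℝ) (x : ℝ) : |clip M R g x| ≤ M := by
  unfold clip
  split_ifs
  · rw [abs_le]
    exact ⟨le_max_left _ _, max_le (by linarith) (min_le_left _ _)⟩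
  · simpa

theorem abs_clip_sub_le {M R : ℝ} (hM : 0 ≤ M) (g : ℝ → ℝ) (x : ℝ) :
    |clip M R g x - g x| ≤ |g x| := by
  unfold clip
  split_ifs
  · rcases min_cases M (g x) with ⟨h, _⟩ | ⟨h, _⟩ <;> rw [h]
    · rw [max_eq_right (by linarith), abs_le]
      constructor <;> cases abs_cases (g x) <;> linarith
    · rcases max_cases (-M) (g x) with ⟨h', _⟩ | ⟨h', _⟩ <;> rw [h', abs_le] <;>
        constructor <;> cases abs_cases (g x) <;> linarith
  · simp

/-- Truncations with growing height and radius converge to `g`. -/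
theorem tendsto_clip {p : ℝ} (hp : 1 ≤ p) {ρ : ℝ → ℝ} (hρ : Admissible ρ)
    {a r : ℕ → ℕ} (ha : Tendsto a atTop atTop) (hr : Tendsto r atTop atTop) {g : ℝ → ℝ}
    (hg : MemLpRho p ρ g) :
    Tendsto (fun n => eLpNorm (fun x => clip (a n) (r n) g x - g x) (ENNReal.ofReal p) (wMeas ρ))
      atTop (nhds 0) := by
  refine tendsto_eLpNorm_zero hp hρ (fun n => (measurable_clip hg.1).sub hg.1) hg
    (fun n x => abs_clip_sub_le (Nat.cast_nonneg _) g x) fun x => ?_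
  filter_upwards [(tendsto_natCast_atTop_atTop.comp ha).eventually (eventually_ge_atTop |g x|),
    (tendsto_natCast_atTop_atTop.comp hr).eventually (eventually_ge_atTop |x|)] with n h1 h2
  simp only [Function.comp] at h1 h2
  have h3 := abs_le.1 h1
  rw [clip, if_pos h2, min_eq_right h3.2, max_eq_right h3.1, sub_self]

/-- The translations `T_s`, `s ∈ [0, 1]`, are uniformly bounded on `L_p^ρ`. -/
theorem eLpNorm_translate_le {p : ℝ} (hp : 1 ≤ p) {ρ : ℝ → ℝ} (hρ : Admissible ρ) :
    ∃ C : ℝ, 1 ≤ C ∧ ∀ u : ℝ → ℝ, Measurable u → ∀ η : ℝ, 0 ≤ η →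
      eLpNorm u (ENNReal.ofReal p) (wMeas ρ) ≤ ENNReal.ofReal η → ∀ s ∈ Set.Icc (0:ℝ) 1,
      eLpNorm (fun x => u (x + s)) (ENNReal.ofReal p) (wMeas ρ) ≤ ENNReal.ofReal (C * η) := by
  have hp0 : 0 < p := by linarith
  obtain ⟨C, hC, hb⟩ := hρ.bound (R := 1) zero_le_one
  refine ⟨C, hC, fun u hu η hη h s hs => ?_⟩
  rw [← lintegral_le_iff hp hρ hu hη] at h
  rw [← lintegral_le_iff hp hρ (show Measurable fun x => u (x + s) from
    hu.comp (measurable_add_const s)) (by positivity)]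
  have hshift : ∫⁻ x, ENNReal.ofReal (|u (x + s)| ^ p * ρ x) =
      ∫⁻ x, ENNReal.ofReal (|u x| ^ p * ρ (x - s)) := by
    rw [← lintegral_add_right_eq_self (fun x => ENNReal.ofReal (|u x| ^ p * ρ (x - s))) s]
    simp
  rw [hshift]
  calc _ ≤ ∫⁻ x, ENNReal.ofReal C * ENNReal.ofReal (|u x| ^ p * ρ x) := by
        refine lintegral_mono fun x => ?_
        rw [← ENNReal.ofReal_mul (by linarith)]
        refine ENNReal.ofReal_le_ofReal ?_
        have h1 := hb (x - s) x (by linarith [hs.1]) (by linarith [hs.2])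
        have := mul_le_mul_of_nonneg_left h1 (show 0 ≤ |u x| ^ p by positivity)
        linarith
    _ ≤ ENNReal.ofReal C * ENNReal.ofReal (η ^ p) := by
        rw [lintegral_const_mul' _ _ ENNReal.ofReal_ne_top]
        gcongr
    _ ≤ _ := by
        rw [← ENNReal.ofReal_mul (by linarith), Real.mul_rpow (by linarith) hη]
        refine ENNReal.ofReal_le_ofReal (mul_le_mul_of_nonneg_right ?_ (by positivity))
        exact Real.self_le_rpow_of_one_le hC hp

/-- Separability of `L_p^ρ`, with measurable representatives. -/
theorem exists_dense_seq {p : ℝ} (hp : 1 ≤ p) {ρ : ℝ → ℝ} (hρ : Admissible ρ)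
    (hi : Integrable ρ) : ∃ e : ℕ → ℝ → ℝ, (∀ i, MemLpRho p ρ (e i)) ∧
      ∀ g, MemLpRho p ρ g → ∀ η : ℝ, 0 < η → ∃ i,
        eLpNorm (fun x => e i x - g x) (ENNReal.ofReal p) (wMeas ρ) ≤ ENNReal.ofReal η := by
  have := isFiniteMeasure_wMeas hi
  have h1 : Fact (1 ≤ ENNReal.ofReal p) := ⟨by simpa using hp⟩
  have h2 : Fact (ENNReal.ofReal p ≠ ⊤) := ⟨ENNReal.ofReal_ne_top⟩
  let E := Lp ℝ (ENNReal.ofReal p) (wMeas ρ)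
  have : TopologicalSpace.SeparableSpace E := inferInstance
  refine ⟨fun i => (TopologicalSpace.denseSeq E i : E), fun i => ?_, fun g hg η hη => ?_⟩
  · rw [memLpRho_iff hp hρ]
    exact ⟨(Lp.stronglyMeasurable _).measurable, (Lp.memLp _).2⟩
  · have hg' := hg.memLp hp hρ
    obtain ⟨i, hi⟩ := (TopologicalSpace.denseRange_denseSeq E).exists_dist_lt (hg'.toLp g) hη
    refine ⟨i, ?_⟩
    rw [dist_comm] at hi
    have h3 : edist (TopologicalSpace.denseSeq E i) (hg'.toLp g) ≤ ENNReal.ofReal η := by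
      rw [edist_dist]
      exact ENNReal.ofReal_le_ofReal hi.le
    rw [Lp.edist_def] at h3
    refine le_trans (le_of_eq (eLpNorm_congr_ae ?_)) h3
    filter_upwards [hg'.coeFn_toLp] with x hx
    rw [Pi.sub_apply, hx]

/-- A slowly growing height profile that is still `p`-integrable against the weight. -/
theorem exists_slow {p : ℝ} (hp : 1 ≤ p) {ρ : ℝ → ℝ} (hρ : Admissible ρ) (hi : Integrable ρ) :
    ∃ a : ℕ → ℕ, Monotone a ∧ Tendsto a atTop atTop ∧
      MemLpRho p ρ (fun x => (a ⌊|x|⌋₊ : ℝ)) := by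
  have hp0 : 0 < p := by linarith
  have hfin := isFiniteMeasure_wMeas hi
  have htail : Tendsto (fun n : ℕ => wMeas ρ {x | (n:ℝ) ≤ |x|}) atTop (nhds 0) := by
    have hm : ∀ n : ℕ, MeasurableSet {x : ℝ | (n:ℝ) ≤ |x|} := fun n =>
      measurableSet_le measurable_const (by fun_prop)
    have := tendsto_measure_iInter_atTop (μ := wMeas ρ)
      (s := fun n : ℕ => {x : ℝ | (n:ℝ) ≤ |x|}) (fun n => (hm n).nullMeasurableSet)
      (fun m n hmn x (hx : (n:ℝ) ≤ |x|) =>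
        show (m:ℝ) ≤ |x| from le_trans (Nat.cast_le.2 hmn) hx) ⟨0, measure_ne_top _ _⟩
    have he : ⋂ n : ℕ, {x : ℝ | (n:ℝ) ≤ |x|} = ∅ := by
      ext x
      obtain ⟨n, hn⟩ := exists_nat_gt |x|
      simp only [Set.mem_iInter, Set.mem_empty_iff_false, iff_false, not_forall]
      exact ⟨n, not_le.2 hn⟩
    rwa [he, measure_empty] at this
  -- height `k` is allowed only beyond the radius `N k`, where the tail of the weight is tiny
  obtain ⟨N, hN, hNt⟩ := extraction_forall_of_eventually
    (P := fun k n => ENNReal.ofReal ((k:ℝ) ^ p) * wMeas ρ {x | (n:ℝ) ≤ |x|} ≤ (1/2) ^ k) (by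
      intro k
      have := ENNReal.Tendsto.const_mul (a := ENNReal.ofReal ((k:ℝ) ^ p)) htail
        (Or.inr ENNReal.ofReal_ne_top)
      rw [mul_zero] at this
      exact (this.eventually_lt_const (ENNReal.pow_pos (by simp) k)).mono fun _ h => h.le)
  set a : ℕ → ℕ := fun n => Nat.findGreatest (fun k => N k ≤ n) n with ha
  refine ⟨a, ?_, ?_, ?_⟩
  · intro m n hmn
    exact Nat.findGreatest_mono (fun k hk => le_trans hk hmn) hmn
  · refine tendsto_atTop.2 fun k => ?_
    filter_upwards [eventually_ge_atTop (N k)] with n hn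
    exact Nat.le_findGreatest ((hN.id_le k).trans hn) hn
  · have hm : Measurable fun x : ℝ => (a ⌊|x|⌋₊ : ℝ) :=
      (measurable_from_nat (f := fun n => (a n : ℝ))).comp (Nat.measurable_floor.comp (by fun_prop))
    refine ⟨hm, ?_⟩
    have h1 : ∫⁻ x, ENNReal.ofReal (|(a ⌊|x|⌋₊ : ℝ)| ^ p * ρ x) =
        ∫⁻ x, ENNReal.ofReal ((a ⌊|x|⌋₊ : ℝ) ^ p) ∂(wMeas ρ) := by
      rw [wMeas, lintegral_withDensity_eq_lintegral_mul _ hρ.1.ennreal_ofReal (by fun_prop)]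
      congr 1; ext x
      rw [Pi.mul_apply, mul_comm, ENNReal.ofReal_mul (hρ.2.1 x).le, abs_of_nonneg (by positivity)]
    rw [h1]
    have h2 : ∀ x : ℝ, ENNReal.ofReal ((a ⌊|x|⌋₊ : ℝ) ^ p) ≤
        ∑' k : ℕ, {x : ℝ | (N k:ℝ) ≤ |x|}.indicator (fun _ => ENNReal.ofReal ((k:ℝ) ^ p)) x := by
      intro x
      by_cases h0 : a ⌊|x|⌋₊ = 0
      · simp [h0, Real.zero_rpow hp0.ne']
      · have h3 : N (a ⌊|x|⌋₊) ≤ ⌊|x|⌋₊ :=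
          Nat.findGreatest_of_ne_zero (P := fun k => N k ≤ ⌊|x|⌋₊) rfl h0
        have h4 : (N (a ⌊|x|⌋₊) : ℝ) ≤ |x| := (Nat.le_floor_iff (abs_nonneg x)).1 h3
        refine le_trans ?_ (ENNReal.le_tsum (a ⌊|x|⌋₊))
        rw [Set.indicator_of_mem (by exact h4)]
    refine (lintegral_mono h2).trans_lt ?_
    have hm : ∀ n : ℕ, MeasurableSet {x : ℝ | (n:ℝ) ≤ |x|} := fun n =>
      measurableSet_le measurable_const (by fun_prop)
    rw [lintegral_tsum fun k => (measurable_const.indicator (hm _)).aemeasurable]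
    have h5 : ∀ k : ℕ, ∫⁻ x, {x : ℝ | (N k:ℝ) ≤ |x|}.indicator
        (fun _ => ENNReal.ofReal ((k:ℝ) ^ p)) x ∂(wMeas ρ) ≤ (1/2) ^ k := by
      intro k
      rw [lintegral_indicator (hm _), setLIntegral_const]
      exact hNt k
    refine (ENNReal.tsum_le_tsum h5).trans_lt ?_
    rw [ENNReal.tsum_geometric, one_div, ENNReal.one_sub_inv_two, inv_inv]
    simp

/-! ### Positive lower density and the universal function -/

/-- A set containing the intervals `[b l, b l + δ]` for an integer sequence `b` of linear growth
has positive lower density. -/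
theorem ldensR_pos_of_linear {E : Set ℝ} {b : ℕ → ℕ} (hb : StrictMono b) {B : ℝ} (hB : 0 < B)
    (hbB : ∀ l, (b l : ℝ) ≤ B * (l + 1)) {δ : ℝ} (hδ : 0 < δ) (hδ1 : δ ≤ 1)
    (h : ∀ l, ∀ s ∈ Set.Icc 0 δ, (b l : ℝ) + s ∈ E) : 0 < ldensR E := by
  have hfin : ∀ N : ℝ, volume (E ∩ Set.Icc 0 N) ≤ ENNReal.ofReal N := fun N =>
    (measure_mono Set.inter_subset_right).trans (by simp)
  have hup : IsBoundedUnder (· ≤ ·) atTop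
      fun N : ℝ => (volume (E ∩ Set.Icc 0 N)).toReal / N := by
    refine isBoundedUnder_of_eventually_le (a := 1) ?_
    filter_upwards [eventually_gt_atTop (0:ℝ)] with N hN
    rw [div_le_one hN]
    exact ENNReal.toReal_le_of_le_ofReal hN.le (hfin N)
  refine lt_of_lt_of_le (show 0 < δ / (2 * B) by positivity)
    (le_liminf_of_le hup.isCoboundedUnder_ge ?_)
  filter_upwards [eventually_ge_atTop (2 * (1 + B))] with N hN
  have hN0 : 0 < N := by linarith
  set L := ⌊(N - 1) / B⌋₊ with hL
  have hLle : (L : ℝ) * B ≤ N - 1 := by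
    rw [← le_div_iff₀ hB]
    exact Nat.floor_le (div_nonneg (by linarith) hB.le)
  have hLge : N ≤ 2 * B * L := by
    have := Nat.lt_floor_add_one ((N - 1) / B)
    rw [div_lt_iff₀ hB, ← hL] at this
    nlinarith
  have hsub : (⋃ l ∈ Finset.range L, Set.Ico (b l : ℝ) (b l + δ)) ⊆ E ∩ Set.Icc 0 N := by
    intro x hx
    simp only [Set.mem_iUnion, Finset.mem_range, exists_prop] at hx
    obtain ⟨l, hl, hx1, hx2⟩ := hx
    have h1 : (l : ℝ) + 1 ≤ L := by exact_mod_cast hl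
    have h2 : B * (l + 1) ≤ L * B := by nlinarith
    refine ⟨?_, ?_, ?_⟩
    · have := h l (x - b l) ⟨by linarith, by linarith⟩
      rwa [add_sub_cancel] at this
    · exact le_trans (Nat.cast_nonneg _) hx1
    · linarith [hbB l]
  have hvol : volume (⋃ l ∈ Finset.range L, Set.Ico (b l : ℝ) (b l + δ)) =
      L * ENNReal.ofReal δ := by
    rw [measure_biUnion_finset]
    · simp
    · intro l _ m _ hlm
      have key : ∀ l m : ℕ, l < m →
          Disjoint (Set.Ico (b l : ℝ) (b l + δ)) (Set.Ico (b m : ℝ) (b m + δ)) := by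
        intro l m hlm
        have : (b l : ℝ) + 1 ≤ b m := by exact_mod_cast hb hlm
        rw [Set.disjoint_left]
        rintro x ⟨_, hx⟩ ⟨hx', _⟩
        linarith
      rcases lt_or_gt_of_ne hlm with h | h
      · exact key _ _ h
      · exact (key _ _ h).symm
    · exact fun l _ => measurableSet_Ico
  have hge : (L : ℝ) * δ ≤ (volume (E ∩ Set.Icc 0 N)).toReal := by
    have h1 := measure_mono (μ := volume) hsub
    rw [hvol] at h1
    have h2 := ENNReal.toReal_mono ((hfin N).trans_lt ENNReal.ofReal_lt_top).ne h1
    simpa [ENNReal.toReal_ofReal hδ.le] using h2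
  rw [div_le_div_iff₀ (by positivity) hN0]
  nlinarith

/-- The level of the block `i` of the universal function, the 2-adic valuation of `i + 1`: every
level `v` recurs with period `2 ^ (v + 1)`. -/
noncomputable def lev (i : ℕ) : ℕ := padicValNat 2 (i + 1)

/-- Centers of the blocks, spaced so that the block `i` can have radius `lev i` with a
comparable gap to its neighbours. -/
noncomputable def ctr : ℕ → ℕ
  | 0 => 0
  | i + 1 => ctr i + 2 * (lev i + 1) + 2 * (lev (i + 1) + 1)

/-- The recursion telescopes because `padicValNat 2 i!` is the sum of the levels below `i`; with
Legendre's formula this makes the growth of `ctr` linear. -/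
theorem ctr_eq (i : ℕ) :
    ctr i = 2 * padicValNat 2 (i.factorial) + 2 * padicValNat 2 ((i + 1).factorial) + 4 * i := by
  have hs : ∀ i : ℕ, padicValNat 2 ((i + 1).factorial) = lev i + padicValNat 2 (i.factorial) := by
    intro i
    rw [Nat.factorial_succ, padicValNat.mul (by positivity) (Nat.factorial_ne_zero i), lev]
  induction i with
  | zero => simp [ctr]
  | succ i ih =>
    rw [ctr, ih, hs (i + 1), hs i]
    ring

theorem ctr_le (i : ℕ) : ctr i ≤ 8 * i + 2 := by
  have hs : ∀ i : ℕ, padicValNat 2 (i.factorial) ≤ i := by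
    intro i
    have := sub_one_mul_padicValNat_factorial (p := 2) i
    omega
  have h1 := hs i
  have h2 := hs (i + 1)
  rw [ctr_eq]
  omega

/-- The centers of two blocks are more than twice the sum of their radii apart. -/
theorem ctr_sep {i j : ℕ} (hij : i < j) :
    ctr i + 2 * (lev i + 1) + 2 * (lev j + 1) ≤ ctr j := by
  induction j, hij using Nat.le_induction with
  | base => rw [ctr]
  | succ j _ ih => rw [ctr]; omega

theorem ctr_strictMono : StrictMono ctr := fun i j hij => by
  have := ctr_sep hij
  omega

theorem ctr_sep_abs {i j : ℕ} (hij : i ≠ j) :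
    2 * ((lev i : ℝ) + 1) + 2 * (lev j + 1) ≤ |(ctr i : ℝ) - ctr j| := by
  rcases lt_or_gt_of_ne hij with h | h
  · have : (ctr i : ℝ) + 2 * (lev i + 1) + 2 * (lev j + 1) ≤ ctr j := by exact_mod_cast ctr_sep h
    exact le_trans (by linarith) (neg_le_abs _)
  · have : (ctr j : ℝ) + 2 * (lev j + 1) + 2 * (lev i + 1) ≤ ctr i := by exact_mod_cast ctr_sep h
    exact le_trans (by linarith) (le_abs_self _)

/-- Level `v` recurs along an arithmetic progression. -/
theorem lev_eq (v l : ℕ) : lev (2 ^ v * (2 * l + 1) - 1) = v := by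
  have : 0 < 2 ^ v * (2 * l + 1) := by positivity
  rw [lev, Nat.sub_add_cancel this, padicValNat.mul (by positivity) (by positivity),
    padicValNat.prime_pow, padicValNat.eq_zero_of_not_dvd (by omega), add_zero]

/-- The universal function built from a sequence `h` of profiles: a copy of `h (lev i)` is placed
around `ctr i`. -/
noncomputable def glue (h : ℕ → ℝ → ℝ) (x : ℝ) : ℝ := ∑' i, h (lev i) (x - ctr i)

/-- At each point at most one block is active. -/
theorem glue_single {h : ℕ → ℝ → ℝ} (hh : ∀ (v : ℕ) y, (v : ℝ) < |y| → h v y = 0)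
    (x : ℝ) : ∃ j, ∀ k, k ≠ j → h (lev k) (x - ctr k) = 0 := by
  by_cases hx : ∃ j, h (lev j) (x - ctr j) ≠ 0
  · obtain ⟨j, hj⟩ := hx
    refine ⟨j, fun k hk => ?_⟩
    by_contra hne
    have h1 : |x - ctr j| ≤ lev j := not_lt.1 fun hlt => hj (hh _ _ hlt)
    have h2 : |x - ctr k| ≤ lev k := not_lt.1 fun hlt => hne (hh _ _ hlt)
    have h3 := ctr_sep_abs hk
    have h4 : |(ctr k : ℝ) - ctr j| ≤ |x - ctr j| + |x - ctr k| := by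
      have := abs_sub (x - ctr j) (x - ctr k)
      rwa [sub_sub_sub_cancel_left] at this
    linarith
  · push Not at hx
    exact ⟨0, fun k _ => hx k⟩

theorem measurable_glue {h : ℕ → ℝ → ℝ} (hh : ∀ (v : ℕ) y, (v : ℝ) < |y| → h v y = 0)
    (hm : ∀ v, Measurable (h v)) : Measurable (glue h) := by
  refine measurable_of_tendsto_metrizable
    (f := fun n x => ∑ i ∈ Finset.range n, h (lev i) (x - ctr i))
    (fun n => Finset.measurable_fun_sum _ fun i _ => (hm _).comp (measurable_sub_const _))
    (tendsto_pi_nhds.2 fun x => ?_)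
  obtain ⟨j, hj⟩ := glue_single hh x
  have hs : Summable fun i => h (lev i) (x - ctr i) := ⟨_, hasSum_single j hj⟩
  exact hs.hasSum.tendsto_sum_nat

/-- Seen from the center of the block `i`, the universal function is the profile `h (lev i)` up to
an error that lives outside the radius `lev i` and is dominated by the height profile `a`. -/
theorem abs_glue_sub_le {h : ℕ → ℝ → ℝ} (hh : ∀ (v : ℕ) y, (v : ℝ) < |y| → h v y = 0)
    {a : ℕ → ℕ} (ha : Monotone a) (hb : ∀ v y, |h v y| ≤ a v) (i : ℕ) (y : ℝ) :
    |glue h (ctr i + y) - h (lev i) y| ≤ if (lev i : ℝ) ≤ |y| then (a ⌊|y|⌋₊ : ℝ) else 0 := by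
  obtain ⟨j, hj⟩ := glue_single hh (ctr i + y)
  have hg : glue h (ctr i + y) = h (lev j) (ctr i + y - ctr j) := (hasSum_single j hj).tsum_eq
  by_cases hij : i = j
  · subst hij
    rw [hg, add_sub_cancel_left, sub_self, abs_zero]
    positivity
  · have h0 : h (lev i) y = 0 := by simpa using hj i hij
    rw [hg, h0, sub_zero]
    by_cases hz : h (lev j) (ctr i + y - ctr j) = 0
    · rw [hz, abs_zero]
      positivity
    · have h1 : |ctr i + y - ctr j| ≤ lev j := not_lt.1 fun hlt => hz (hh _ _ hlt)
      have h2 := ctr_sep_abs hij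
      have h3 : |(ctr i : ℝ) - ctr j| ≤ |ctr i + y - ctr j| + |y| := by
        have := abs_sub (ctr i + y - ctr j) y
        rwa [show (ctr i : ℝ) + y - ctr j - y = ctr i - ctr j by ring] at this
      rw [if_pos (by linarith)]
      refine (hb _ _).trans (Nat.cast_le.2 (ha (Nat.le_floor ?_)))
      linarith

/-! ### Sufficiency of integrability -/

/-- Small translations move a compactly supported continuous function little. -/
theorem exists_translate_close {p : ℝ} (hp : 1 ≤ p) {ρ : ℝ → ℝ} (hi : Integrable ρ)
    {g : ℝ → ℝ} (hg : Continuous g) (hc : HasCompactSupport g) {ε : ℝ} (hε : 0 < ε) :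
    ∃ δ : ℝ, 0 < δ ∧ δ ≤ 1 ∧ ∀ s ∈ Set.Icc 0 δ,
      eLpNorm (fun x => g (x + s) - g x) (ENNReal.ofReal p) (wMeas ρ) ≤ ENNReal.ofReal ε := by
  have := isFiniteMeasure_wMeas hi
  have hp0 : 0 < p := by linarith
  have huc : UniformContinuous g :=
    hg.uniformContinuous_of_tendsto_cocompact hc.is_zero_at_infty
  set K := (wMeas ρ Set.univ ^ (ENNReal.ofReal p).toReal⁻¹).toReal with hK
  have hK0 : 0 ≤ K := ENNReal.toReal_nonneg
  have hKe : wMeas ρ Set.univ ^ (ENNReal.ofReal p).toReal⁻¹ = ENNReal.ofReal K := by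
    rw [hK, ENNReal.ofReal_toReal]
    exact ENNReal.rpow_ne_top_of_nonneg (by positivity) (measure_ne_top _ _)
  obtain ⟨δ, hδ, h⟩ := Metric.uniformContinuous_iff.1 huc (ε / (K + 1)) (by positivity)
  refine ⟨min (δ / 2) 1, by positivity, min_le_right _ _, fun s hs => ?_⟩
  have hs2 : s ≤ δ / 2 := hs.2.trans (min_le_left _ _)
  refine (eLpNorm_le_of_ae_bound (C := ε / (K + 1)) (ae_of_all _ fun x => ?_)).trans ?_
  · have := h (a := x + s) (b := x) (by
      rw [Real.dist_eq, add_sub_cancel_left, abs_of_nonneg hs.1]; linarith)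
    exact this.le
  · rw [hKe, ← ENNReal.ofReal_mul hK0]
    refine ENNReal.ofReal_le_ofReal ?_
    rw [mul_div_assoc', div_le_iff₀ (by positivity)]
    nlinarith

/-- Triangle inequality for weighted norms bounded by real numbers. -/
theorem eLpNorm_add_le_ofReal {p : ℝ} (hp : 1 ≤ p) {ρ : ℝ → ℝ} {u v w : ℝ → ℝ}
    (hu : Measurable u) (hv : Measurable v) {α β : ℝ} (hα : 0 ≤ α) (hβ : 0 ≤ β)
    (hu' : eLpNorm u (ENNReal.ofReal p) (wMeas ρ) ≤ ENNReal.ofReal α)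
    (hv' : eLpNorm v (ENNReal.ofReal p) (wMeas ρ) ≤ ENNReal.ofReal β)
    (hw : ∀ x, w x = u x + v x) :
    eLpNorm w (ENNReal.ofReal p) (wMeas ρ) ≤ ENNReal.ofReal (α + β) := by
  have : w = u + v := funext hw
  rw [this, ENNReal.ofReal_add hα hβ]
  have hsum := add_le_add hu' hv'
  exact (eLpNorm_add_le hu.aestronglyMeasurable hv.aestronglyMeasurable (by simpa using hp)).trans
    hsum

/-- The function `glue h`, where `h v` is a truncation of a member of a dense sequence that is
revisited at infinitely many levels, is frequently hypercyclic. Near the center of a block of level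
`v` it agrees with `h v` up to an error of norm `o(1)` as `v → ∞`. -/
theorem fh_of_integrable {p : ℝ} (hp : 1 ≤ p) {ρ : ℝ → ℝ} (hρ : Admissible ρ)
    (hi : Integrable ρ) : FHTransLp p ρ := by
  have hp0 : 0 < p := by linarith
  have := isFiniteMeasure_wMeas hi
  obtain ⟨e, heL, hed⟩ := exists_dense_seq hp hρ hi
  obtain ⟨a, ham, hat, haL⟩ := exists_slow hp hρ hi
  obtain ⟨C, hC, hCt⟩ := eLpNorm_translate_le hp hρ
  set h : ℕ → ℝ → ℝ := fun v => clip (a v) v (e (Nat.unpair v).1) with hh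
  have hsupp : ∀ (v : ℕ) y, (v : ℝ) < |y| → h v y = 0 := fun v y hy => by
    simp only [hh, clip]
    rw [if_neg (not_le.2 hy)]
  have hbd : ∀ v y, |h v y| ≤ a v := fun v y => abs_clip_le (Nat.cast_nonneg _) _ _
  have hmeas : ∀ v, Measurable (h v) := fun v => measurable_clip (heL _).1
  have hfm : Measurable (glue h) := measurable_glue hsupp hmeas
  have hkey := abs_glue_sub_le hsupp ham hbd
  have hlev0 : lev 0 = 0 := by simp [lev]
  refine ⟨glue h, ?_, fun g hg ε hε => ?_⟩
  · rw [memLpRho_iff hp hρ]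
    refine ⟨hfm, ((haL.memLp hp hρ).of_le_mul (c := 2) hfm.aestronglyMeasurable
      (ae_of_all _ fun y => ?_)).2⟩
    have h1 := hkey 0 y
    have h2 := hbd 0 y
    have h3 : (a 0 : ℝ) ≤ a ⌊|y|⌋₊ := Nat.cast_le.2 (ham (Nat.zero_le _))
    rw [hlev0] at h1
    simp only [ctr, Nat.cast_zero, zero_add, abs_nonneg, if_true] at h1
    rw [Real.norm_eq_abs, Real.norm_natCast]
    have h4 := abs_sub_abs_le_abs_sub (glue h y) (h 0 y)
    linarith
  -- `gc` is a compactly supported continuous approximation of the target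
  obtain ⟨gc, hgcs, hgcn, hgcc, -⟩ :=
    (hg.memLp hp hρ).exists_hasCompactSupport_eLpNorm_sub_le ENNReal.ofReal_ne_top
      (ε := ENNReal.ofReal (ε / 4)) (by simpa using hε)
  have hgcn' : eLpNorm (fun x => gc x - g x) (ENNReal.ofReal p) (wMeas ρ) ≤
      ENNReal.ofReal (ε / 4) := by
    have := eLpNorm_sub_comm g gc (ENNReal.ofReal p) (wMeas ρ)
    rw [this] at hgcn
    exact hgcn
  have hgcm := hgcc.measurable
  have hgcL : MemLpRho p ρ gc := by
    obtain ⟨M, hM⟩ := hgcc.bounded_above_of_compact_support hgcs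
    exact memLpRho_of_bounded hp hρ hi hgcm hM
  obtain ⟨δ, hδ, hδ1, hδt⟩ := exists_translate_close hp hi hgcc hgcs (ε := ε / 4) (by positivity)
  set η := ε / (6 * C) with hη
  have hη0 : 0 < η := by positivity
  obtain ⟨k, hk⟩ := hed gc hgcL η hη0
  -- a level `v` that carries a good copy of `e k` and whose interference error is small
  obtain ⟨v, hvk, hv1, hv2⟩ : ∃ v, (Nat.unpair v).1 = k ∧
      eLpNorm (fun x => h v x - e k x) (ENNReal.ofReal p) (wMeas ρ) ≤ ENNReal.ofReal η ∧
      eLpNorm (fun y => if (v : ℝ) ≤ |y| then (a ⌊|y|⌋₊ : ℝ) else 0) (ENNReal.ofReal p) (wMeas ρ) ≤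
        ENNReal.ofReal η := by
    have ht : Tendsto (fun V => Nat.pair k V) atTop atTop :=
      tendsto_atTop_mono (fun V => Nat.right_le_pair k V) tendsto_id
    have t1 := tendsto_clip hp hρ (hat.comp ht) ht (heL k)
    have t2 : Tendsto (fun v : ℕ => eLpNorm (fun y => if (v : ℝ) ≤ |y| then (a ⌊|y|⌋₊ : ℝ) else 0)
        (ENNReal.ofReal p) (wMeas ρ)) atTop (nhds 0) := by
      refine tendsto_eLpNorm_zero hp hρ (fun n => ?_) haL (fun n x => ?_) fun x => ?_
      · exact Measurable.ite (measurableSet_le measurable_const (by fun_prop)) haL.1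
          measurable_const
      · split_ifs
        · exact le_rfl
        · simp
      · obtain ⟨n, hn⟩ := exists_nat_gt |x|
        filter_upwards [eventually_ge_atTop n] with m hm
        have : (n : ℝ) ≤ m := Nat.cast_le.2 hm
        rw [if_neg (by linarith)]
    have hη' : (0 : ENNReal) < ENNReal.ofReal η := by simpa using hη0
    obtain ⟨V, hV1, hV2⟩ := ((t1.eventually_lt_const hη').and
      ((t2.comp ht).eventually_lt_const hη')).exists
    refine ⟨Nat.pair k V, by simp, ?_, hV2.le⟩
    simpa [hh] using hV1.le
  -- the blocks of level `v` occur along an arithmetic progression of indices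
  refine ldensR_pos_of_linear (b := fun l => ctr (2 ^ v * (2 * l + 1) - 1)) (B := 16 * 2 ^ v)
    (δ := δ) ?_ (by positivity) (fun l => ?_) hδ hδ1 fun l s hs => ?_
  · intro l m hlm
    refine ctr_strictMono ?_
    have h1 : 2 ^ v * (2 * l + 1) < 2 ^ v * (2 * m + 1) :=
      Nat.mul_lt_mul_of_pos_left (by omega) (by positivity)
    have h2 : 0 < 2 ^ v * (2 * l + 1) := by positivity
    omega
  · have h1 := ctr_le (2 ^ v * (2 * l + 1) - 1)
    have h2 : 0 < 2 ^ v * (2 * l + 1) := by positivity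
    have h3 : ctr (2 ^ v * (2 * l + 1) - 1) ≤ 16 * 2 ^ v * (l + 1) := by
      have : 16 * 2 ^ v * (l + 1) = 8 * (2 ^ v * (2 * l + 1)) + 8 * 2 ^ v := by ring
      omega
    exact_mod_cast h3
  · set i := 2 ^ v * (2 * l + 1) - 1 with hi'
    have hlev : lev i = v := lev_eq v l
    refine ⟨add_nonneg (Nat.cast_nonneg _) hs.1, ?_⟩
    have hs1 : s ∈ Set.Icc (0 : ℝ) 1 := ⟨hs.1, hs.2.trans hδ1⟩
    have hshift : Measurable fun x => glue h (ctr i + x) := hfm.comp (measurable_const_add _)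
    have e1 : eLpNorm (fun y => glue h (ctr i + y) - h v y) (ENNReal.ofReal p) (wMeas ρ) ≤
        ENNReal.ofReal η := by
      refine (eLpNorm_mono_real fun y => ?_).trans hv2
      have := hkey i y
      rwa [hlev] at this
    have e2 := eLpNorm_add_le_ofReal hp (hshift.sub (hmeas v)) ((hmeas v).sub (heL k).1)
      hη0.le hη0.le e1 hv1 (w := fun y => glue h (ctr i + y) - e k y)
      (fun x => by simp only [Pi.sub_apply]; ring)
    have e3 := eLpNorm_add_le_ofReal hp (hshift.sub (heL k).1) ((heL k).1.sub hgcm)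
      (by positivity) hη0.le e2 hk (w := fun y => glue h (ctr i + y) - gc y)
      (fun x => by simp only [Pi.sub_apply]; ring)
    have e4 := hCt _ (hshift.sub hgcm) _ (by positivity) e3 s hs1
    have hgs : Measurable fun x => gc (x + s) := hgcm.comp (measurable_add_const s)
    have hfs : Measurable fun x => glue h (ctr i + (x + s)) := hshift.comp (measurable_add_const s)
    have e5 := eLpNorm_add_le_ofReal hp (hfs.sub hgs) (hgs.sub hgcm)
      (by positivity) (by positivity) e4 (hδt s hs) (w := fun x => glue h (ctr i + (x + s)) - gc x)
      (fun x => by simp only [Pi.sub_apply]; ring)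
    have e6 := eLpNorm_add_le_ofReal hp (hfs.sub hgcm) (hgcm.sub hg.1)
      (by positivity) (by positivity) e5 hgcn' (w := fun x => glue h (ctr i + (x + s)) - g x)
      (fun x => by simp only [Pi.sub_apply]; ring)
    have hsum : C * (η + η + η) + ε / 4 + ε / 4 = ε := by
      rw [hη]; field_simp; ring
    rw [hsum] at e6
    rw [TransLpClose, lintegral_le_iff hp hρ (show Measurable fun x => glue h (x + (ctr i + s)) - g x
      from (hfm.comp (measurable_add_const _)).sub hg.1) hε.le]
    refine le_trans (le_of_eq ?_) e6
    congr 1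
    ext x
    rw [show x + ((ctr i : ℝ) + s) = ctr i + (x + s) by ring]

theorem ldensR_empty : ldensR ∅ = 0 := by
  simp [ldensR]

/-- The `T`-periodic extension of the restriction of `g` to a period centered at `0`. -/
noncomputable def periodize (T : ℝ) (g : ℝ → ℝ) (x : ℝ) : ℝ := g (x - T * round (x / T))

/-- Frequent hypercyclicity gives a dense orbit; the periodic points are dense because the periodic
extension of a bounded, compactly supported function converges to it as the period grows. -/
theorem chaotic_of_integrable {p : ℝ} (hp : 1 ≤ p) {ρ : ℝ → ℝ} (hρ : Admissible ρ)
    (hi : Integrable ρ) : ChaoticTransLp p ρ := by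
  have hp0 : 0 < p := by linarith
  refine ⟨?_, fun g hg ε hε => ?_⟩
  · obtain ⟨f, hf, h⟩ := fh_of_integrable hp hρ hi
    refine ⟨f, hf, fun g hg ε hε => ?_⟩
    have h1 := h g hg ε hε
    by_contra hne
    rw [show {t : ℝ | 0 ≤ t ∧ TransLpClose p ρ f g t ε} = ∅ from
      Set.eq_empty_iff_forall_notMem.2 fun t ht => hne ⟨t, ht⟩, ldensR_empty] at h1
    exact lt_irrefl _ h1
  have hε2 : (0 : ENNReal) < ENNReal.ofReal (ε / 2) := by simpa using hε
  obtain ⟨K, hK⟩ := ((tendsto_clip hp hρ tendsto_id tendsto_id hg).eventually_lt_const hε2).exists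
  set g1 := clip (id K : ℕ) (id K : ℕ) g with hg1
  have hg1m : Measurable g1 := measurable_clip hg.1
  have hg1b : ∀ x, |g1 x| ≤ K := fun x => abs_clip_le (Nat.cast_nonneg _) g x
  have hpm : ∀ n : ℕ, Measurable (periodize (n + 1) g1) := fun n =>
    hg1m.comp (measurable_id.sub (measurable_const.mul
      ((measurable_from_top (f := fun k : ℤ => (k : ℝ))).comp
        (Measurable.comp (g := (round : ℝ → ℤ)) (by
          have : (round : ℝ → ℤ) = fun x => ⌊x + 1 / 2⌋ := funext round_eq
          rw [this]
          exact Int.measurable_floor.comp (measurable_add_const _)) (measurable_id.div_const _)))))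
  have ht : Tendsto (fun n : ℕ => eLpNorm (fun x => periodize (n + 1) g1 x - g1 x)
      (ENNReal.ofReal p) (wMeas ρ)) atTop (nhds 0) := by
    refine tendsto_eLpNorm_zero hp hρ (fun n => (hpm n).sub hg1m)
      (memLpRho_of_bounded hp hρ hi (measurable_const (a := (2 * K : ℝ))) fun _ => le_rfl)
      (fun n x => ?_) fun x => ?_
    · rw [abs_of_nonneg (show (0 : ℝ) ≤ 2 * K by positivity)]
      refine (abs_sub _ _).trans ?_
      have h1 := hg1b (x - (n + 1) * round (x / (n + 1)))
      have h2 := hg1b x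
      rw [periodize]
      linarith
    · obtain ⟨N, hN⟩ := exists_nat_gt (2 * |x|)
      filter_upwards [eventually_ge_atTop N] with n hn
      have hn' : (N : ℝ) ≤ n := Nat.cast_le.2 hn
      have h0 : round (x / ((n : ℝ) + 1)) = 0 := by
        rw [round_eq, Int.floor_eq_zero_iff, Set.mem_Ico]
        have h1 : -(1 / 2) ≤ x / ((n : ℝ) + 1) := by
          rw [le_div_iff₀ (by positivity)]
          have := neg_abs_le x
          linarith
        have h2 : x / ((n : ℝ) + 1) < 1 / 2 := by
          rw [div_lt_iff₀ (by positivity)]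
          have := le_abs_self x
          linarith
        constructor <;> linarith
      rw [periodize, h0]
      simp
  obtain ⟨n, hn⟩ := (ht.eventually_lt_const hε2).exists
  have hT : (0 : ℝ) < n + 1 := by positivity
  refine ⟨periodize (n + 1) g1, ?_, ⟨n + 1, hT, ?_⟩, ?_⟩
  · exact memLpRho_of_bounded hp hρ hi (hpm n) fun x => hg1b _
  · have hper : ∀ x, periodize (n + 1) g1 (x + (n + 1)) = periodize (n + 1) g1 x := by
      intro x
      rw [periodize, periodize, add_div, div_self hT.ne', round_add_one]
      push_cast
      congr 1
      ring
    simp [hper, Real.zero_rpow hp0.ne']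
  · rw [lintegral_le_iff hp hρ (show Measurable fun x => periodize (n + 1) g1 x - g x from
      (hpm n).sub hg.1) hε.le]
    have := eLpNorm_add_le_ofReal hp ((hpm n).sub hg1m) (hg1m.sub hg.1) (by positivity)
      (by positivity) hn.le hK.le (w := fun x => periodize (n + 1) g1 x - g x)
      (fun x => by simp only [Pi.sub_apply]; ring)
    rwa [add_halves] at this

/-- For `1 ≤ p < ∞` and `ρ` an admissible weight function on ℝ, the following
are equivalent: (1) the translation semigroup is frequently hypercyclic on `L_p^ρ(ℝ)`;
(2) `Σ_{k∈ℤ} ρ(k) < ∞`; (3) `∫_{-∞}^∞ ρ(t) dt < ∞`; (4) the translation semigroup is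
chaotic on `L_p^ρ(ℝ)`. -/
theorem translation_freqHypercyclic_tfae_Lp
    (p : ℝ) (hp : 1 ≤ p) (ρ : ℝ → ℝ) (hρ : Admissible ρ) :
    (FHTransLp p ρ ↔ Summable (fun k : ℤ => ρ (k : ℝ))) ∧
    (FHTransLp p ρ ↔ Integrable ρ volume) ∧
    (FHTransLp p ρ ↔ ChaoticTransLp p ρ) := by
  refine ⟨⟨summable_of_FH hp hρ, fun h => fh_of_integrable hp hρ (integrable_of_summable hρ h)⟩,
    ⟨fun h => integrable_of_summable hρ (summable_of_FH hp hρ h), fh_of_integrable hp hρ⟩,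
    ⟨fun h => chaotic_of_integrable hp hρ (integrable_of_summable hρ (summable_of_FH hp hρ h)),
      fun h => fh_of_integrable hp hρ (integrable_of_summable hρ (summable_of_chaotic hp hρ h))⟩⟩
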